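/- Let π be a set of primes and G a finitely generated abelian group. Let B be a ℤG-module whose underlying additive group is a Černikov ω-group for some set of primes ω, and suppose that no infinite ℤG-module quotient of B is also a ℤG-module quotient of some ℤG-module whose underlying abelian group is torsion-free of finite rank and π-spectral. If A is a ℤG-module belonging to the class 𝔠(G,π), then Ext^n_{ℤG}(A,B) is a Černikov ω-group for all n ≥ 0. -/

import Mathlib

/-!
Statement 11: Lemma 3.4 of the paper.  Ext^n_{ℤG}(A, B) is the Ext group in
the abelian category Rep ℤ G of ℤG-modules.
-/

open CategoryTheory

noncomputable section




/-- The rational circle `ℚ/ℤ`. -/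
abbrev RatCircle : Type := ℚ ⧸ AddSubgroup.zmultiples (1 : ℚ)

/-- The quasicyclic (Prüfer) `p`-group, realized as the `p`-primary part of `ℚ/ℤ`. -/
def pruferSubgroup (p : ℕ) : AddSubgroup RatCircle where
  carrier := {x | ∃ n : ℕ, (p ^ n : ℕ) • x = 0}
  zero_mem' := ⟨0, smul_zero _⟩
  add_mem' := by
    rintro a b ⟨m, hm⟩ ⟨n, hn⟩
    refine ⟨m + n, ?_⟩
    have ha : (p ^ m * p ^ n) • a = 0 := by rw [mul_comm, mul_smul, hm, smul_zero]
    have hb : (p ^ m * p ^ n) • b = 0 := by rw [mul_smul, hn, smul_zero]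
    rw [smul_add, pow_add, ha, hb, add_zero]
  neg_mem' := by
    rintro a ⟨m, hm⟩
    exact ⟨m, by rw [smul_neg, hm, neg_zero]⟩

/-- A group has a quasicyclic `p`-section if some quotient of a subgroup is
isomorphic to the Prüfer `p`-group. -/
def HasQuasicyclicSection (G : Type*) [Group G] (p : ℕ) : Prop :=
  ∃ (H : Subgroup G) (K : Subgroup H) (_ : K.Normal),
    Nonempty ((H ⧸ K) ≃* Multiplicative (pruferSubgroup p))

/-- The spectrum of a group: the set of primes `p` such that the group has a
section isomorphic to the quasicyclic `p`-group. -/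
def groupSpectrum (G : Type*) [Group G] : Set ℕ :=
  {p | p.Prime ∧ HasQuasicyclicSection G p}

/-- The spectrum of an (additive) abelian group, via `Multiplicative`. -/
abbrev addSpectrum (A : Type*) [AddGroup A] : Set ℕ :=
  groupSpectrum (Multiplicative A)

/-- An abelian group has finite rank if its torsion-free rank and all of its
`p`-ranks are finite. -/
def FiniteRankAbelian (A : Type*) [AddCommGroup A] : Prop :=
  (∃ n : ℕ, ∀ k : ℕ, (∃ f : (Fin k →₀ ℤ) →+ A, Function.Injective f) → k ≤ n) ∧
  ∀ p : ℕ, p.Prime → {a : A | (p : ℕ) • a = 0}.Finite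

/-- A group has finite rank (in the sense appropriate for abelian groups:
finite torsion-free rank and finite `p`-ranks). -/
def FiniteRankGroup (G : Type*) [Group G] : Prop :=
  (∃ n : ℕ, ∀ k : ℕ,
    (∃ f : Multiplicative (Fin k →₀ ℤ) →* G, Function.Injective f) → k ≤ n) ∧
  ∀ p : ℕ, p.Prime → {g : G | g ^ p = 1}.Finite

/-- A solvable group of finite rank: a solvable group all of whose abelian
sections have finite rank. -/
def SolvableOfFiniteRank (G : Type*) [Group G] : Prop :=
  IsSolvable G ∧
    ∀ (H : Subgroup G) (K : Subgroup H) (_ : K.Normal),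
      (∀ x y : H ⧸ K, x * y = y * x) → FiniteRankGroup (H ⧸ K)

/-- A group is virtually abelian. -/
def VirtuallyAbelian (G : Type*) [Group G] : Prop :=
  ∃ H : Subgroup G, H.index ≠ 0 ∧ ∀ x y : H, x * y = y * x

/-- A `ℤG`-module (given as an object of `Rep ℤ G`) whose underlying abelian group
is torsion-free, of finite rank, and `π`-spectral. -/
def NiceRep {G : Type} [Group G] (π : Set ℕ) (M : Rep.{0} ℤ G) : Prop :=
  (∀ g : M, g ≠ 0 → ¬IsOfFinAddOrder g) ∧ FiniteRankAbelian M ∧ addSpectrum M ⊆ π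

/-- The class `𝒰` of solvable groups of finite rank. -/
def MemClassU (G : Type) [Group G] : Prop :=
  SolvableOfFiniteRank G ∧
  ∃ (N : Subgroup G) (_ : N.Normal),
    Group.IsNilpotent N ∧
    Group.FG (G ⧸ N) ∧ VirtuallyAbelian (G ⧸ N) ∧
    ∃ (r : ℕ) (T : Fin (r + 1) → Subgroup G),
      Monotone T ∧ T 0 = ⊥ ∧
      ((T (Fin.last r) : Set G) = {g : G | g ∈ N ∧ IsOfFinOrder g}) ∧
      (∀ (i : Fin (r + 1)) (g t : G), t ∈ T i → g * t * g⁻¹ ∈ T i) ∧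
      (∀ (i : Fin r) (n t : G), n ∈ N → t ∈ T i.succ →
        n * t * n⁻¹ * t⁻¹ ∈ T i.castSucc) ∧
      (∀ i : Fin r, (T i.castSucc).relIndex (T i.succ) = 0 →
        ∃ M : Rep.{0} ℤ (G ⧸ N), NiceRep (groupSpectrum G) M ∧
          ∃ φ : M → G,
            (∀ m : M, φ m ∈ T i.succ) ∧
            (∀ m m' : M, (φ (m + m'))⁻¹ * (φ m * φ m') ∈ T i.castSucc) ∧
            (∀ t : G, t ∈ T i.succ → ∃ m : M, (φ m)⁻¹ * t ∈ T i.castSucc) ∧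
            (∀ (g : G) (m : M),
              (φ (M.ρ (QuotientGroup.mk g) m))⁻¹ * (g * φ m * g⁻¹) ∈ T i.castSucc))

/-- A Černikov abelian group: it has a subgroup of finite index that is a direct
sum of finitely many quasicyclic groups. -/
def IsCernikov (A : Type*) [AddCommGroup A] : Prop :=
  ∃ (S : AddSubgroup A) (r : ℕ) (p : Fin r → ℕ),
    S.index ≠ 0 ∧ (∀ i, (p i).Prime) ∧
    Nonempty (S ≃+ ((i : Fin r) → pruferSubgroup (p i)))

/-- A torsion `ω`-group: every element has finite order divisible only by primes
in `ω`. -/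
def IsOmegaTorsion (ω : Set ℕ) (A : Type*) [AddGroup A] : Prop :=
  ∀ a : A, IsOfFinAddOrder a ∧
    ∀ p : ℕ, p.Prime → (p : ℤ) ∣ (addOrderOf a : ℤ) → p ∈ ω

/-- A Černikov `ω`-group. -/
def IsCernikovOmega (ω : Set ℕ) (A : Type*) [AddCommGroup A] : Prop :=
  IsCernikov A ∧ IsOmegaTorsion ω A

/-- The class `𝔠(G, π)`: the smallest class of `ℤG`-modules containing every
finite `ℤG`-module and every `ℤG`-module whose underlying abelian group is
torsion-free of finite rank and `π`-spectral, and closed under forming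
`ℤG`-module quotients and extensions. -/
inductive MemC (G : Type) [Group G] (π : Set ℕ) : Rep ℤ G → Prop
  | of_finite (A : Rep ℤ G) (h : Finite (A : Type)) : MemC G π A
  | of_nice (A : Rep ℤ G) (h : NiceRep π A) : MemC G π A
  | quot (A B : Rep ℤ G) (f : A ⟶ B) (hf : Function.Surjective f.hom)
      (hA : MemC G π A) : MemC G π B
  | ext (A B C : Rep ℤ G) (f : A ⟶ B) (g : B ⟶ C)
      (hinj : Function.Injective f.hom) (hsurj : Function.Surjective g.hom)
      (hexact : ∀ b : (B : Type), g.hom b = 0 ↔ ∃ a : (A : Type), f.hom a = b)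
      (hA : MemC G π A) (hC : MemC G π C) : MemC G π B

/-!
A Černikov group is the same thing as an Artinian `ℤ`-module, so Černikov `ω`-groups form a Serre
class, and the long exact sequences for `Ext` reduce the claim to modules `A` whose underlying group
is torsion-free, of finite rank and `π`-spectral; quotients of such modules stay within reach
because the kernels have the same three properties. The module `B` is the sum of its `π'`-part and
its `π`-part.

Suppose first that `B` is a `π'`-group, and let `N` be a `π'`-number such that every element of `B`
is annihilated by a power of `N`. Then `A` has a finitely generated submodule `A₀` such that
`A / A₀` is torsion with finite `N`-primary part. The remaining part of `A / A₀` is annihilated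
elementwise by integers acting bijectively on `B`, so it contributes nothing to `Ext`, and what is
left are `Ext` groups of finitely generated modules over a Noetherian ring.

Now suppose that `B` is a `π`-group. Up to a finite module, for which multiplication by its order
reduces `A` to a finite quotient, `B` is divisible. Let `R = ℤG`, let `I` be the annihilator of `A`,
and let `D` be a quotient of `B`. Then `D / ID` is a quotient of a finite sum of copies of a
localisation of `R / I`, which is torsion-free, of finite rank and `π`-spectral because `R / I`
embeds into a power of `A`. So `D / ID` is finite and divisible, that is, `ID = D`. As `D` is
Artinian, the images of the powers of each `a ∈ I` stabilise on `D`. Where `a` acts surjectively,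
its kernel is finite and it kills `Ext(A, -)`, so `Ext(A, D)` is a quotient of an `Ext` group with
finite coefficients. Where all generators of `I` act nilpotently, `ID = D` forces `D = 0`.
-/

/-! ### The quasicyclic groups -/

/-- Divisibility of an additive monoid, as the bare property (`DivisibleBy` carries data). -/
def IsDivisible (A : Type*) [AddMonoid A] : Prop :=
  ∀ m : ℕ, m ≠ 0 → Function.Surjective fun x : A ↦ m • x

section Divisible

variable {A D : Type*} [AddCommGroup A] [AddCommGroup D]

lemma IsDivisible.of_prime
    (h : ∀ p : ℕ, p.Prime → Function.Surjective fun x : A ↦ p • x) : IsDivisible A := by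
  intro m
  induction m using induction_on_primes with
  | zero => exact fun h0 ↦ (h0 rfl).elim
  | one => exact fun _ x ↦ ⟨x, one_smul ℕ x⟩
  | prime_mul p a hp ih =>
    intro hpa x
    obtain ⟨y, rfl⟩ := h p hp x
    obtain ⟨z, rfl⟩ := ih (right_ne_zero_of_mul hpa) y
    exact ⟨z, mul_smul p a z⟩

lemma IsDivisible.of_surjective (hA : IsDivisible A) {f : A →+ D} (hf : Function.Surjective f) :
    IsDivisible D := by
  intro m hm d
  obtain ⟨a, rfl⟩ := hf d
  obtain ⟨b, rfl⟩ := hA m hm a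
  exact ⟨f b, (map_nsmul f m b).symm⟩

lemma IsDivisible.baer (hA : IsDivisible A) : Module.Baer ℤ A := by
  have hsurj {n : ℤ} (hn : n ≠ 0) : Function.Surjective fun a : A ↦ n • a := by
    intro x
    obtain ⟨y, hy⟩ := hA n.natAbs (Int.natAbs_ne_zero.2 hn) x
    obtain h | h := Int.natAbs_eq n
    · exact ⟨y, by rw [h]; simpa only [natCast_zsmul] using hy⟩
    · exact ⟨-y, by rw [h]; simpa only [neg_smul, smul_neg, neg_neg, natCast_zsmul] using hy⟩
  let _ : DivisibleBy A ℤ := divisibleByOfSMulRightSurj A ℤ hsurj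
  exact Module.Baer.of_divisible A

lemma IsDivisible.exists_addMonoidHom_apply_eq (hD : IsDivisible D) {a : A} {d : D}
    (h : addOrderOf a • d = 0) : ∃ f : A →+ D, f a = d := by
  let i : ZMod (addOrderOf a) →+ A :=
    ZMod.lift _ ⟨zmultiplesHom A a, by simp [addOrderOf_nsmul_eq_zero]⟩
  let j : ZMod (addOrderOf a) →+ D := ZMod.lift _ ⟨zmultiplesHom D d, by simpa using h⟩
  have hi : Function.Injective i := by
    refine (ZMod.lift_injective _).2 fun m hm ↦ ?_
    rw [ZMod.intCast_zmod_eq_zero_iff_dvd]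
    exact addOrderOf_dvd_iff_zsmul_eq_zero.2 (by simpa using hm)
  obtain ⟨f, hf⟩ := hD.baer.extension_property_addMonoidHom i hi j
  have hi1 : i ((1 : ℤ) : ZMod _) = a := (ZMod.lift_coe _ _ 1).trans (one_zsmul a)
  have hj1 : j ((1 : ℤ) : ZMod _) = d := (ZMod.lift_coe _ _ 1).trans (one_zsmul d)
  exact ⟨f, by rw [← hi1, ← hj1, ← hf, AddMonoidHom.comp_apply]⟩

end Divisible

lemma RatCircle.mem_zmultiples_of_addOrderOf_nsmul_eq_zero {x y : RatCircle}
    (hx : IsOfFinAddOrder x) (hxy : addOrderOf x • y = 0) : y ∈ AddSubgroup.zmultiples x := by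
  have hpos : addOrderOf x ≠ 0 := hx.addOrderOf_pos.ne'
  have hreg : IsSMulRegular ℚ (addOrderOf x) :=
    .of_right_eq_zero_of_smul fun _ ↦ by simp [hpos]
  have hsub : (AddSubgroup.zmultiples x : Set RatCircle) ⊆ {u | addOrderOf x • u = 0} := by
    rintro _ ⟨k, rfl⟩
    change addOrderOf x • k • x = 0
    rw [smul_comm, addOrderOf_nsmul_eq_zero, smul_zero]
  have hfin := AddCircle.finite_torsion_of_isSMulRegular (1 : ℚ) _ hreg
  have hcard : {u : RatCircle | addOrderOf x • u = 0}.encard ≤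
      (AddSubgroup.zmultiples x : Set RatCircle).encard := by
    refine (AddCircle.card_torsion_le_of_isSMulRegular (1 : ℚ) _ hpos hreg).trans_eq ?_
    rw [← Nat.card_zmultiples, ← (hfin.subset hsub).cast_ncard_eq]
    rfl
  exact (hfin.eq_of_subset_of_encard_le' hsub hcard).ge hxy

namespace pruferSubgroup

variable {p : ℕ}

lemma exists_pow_nsmul_eq_zero (x : pruferSubgroup p) : ∃ n : ℕ, p ^ n • x = 0 := by
  obtain ⟨n, hn⟩ := x.2
  exact ⟨n, Subtype.ext hn⟩

lemma exists_addOrderOf_eq_pow (hp : p.Prime) (x : pruferSubgroup p) :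
    ∃ n : ℕ, addOrderOf x = p ^ n := by
  obtain ⟨n, hn⟩ := exists_pow_nsmul_eq_zero x
  obtain ⟨k, -, hk⟩ := (Nat.dvd_prime_pow hp).1 (addOrderOf_dvd_of_nsmul_eq_zero hn)
  exact ⟨k, hk⟩

lemma finite_torsionBy (p : ℕ) {n : ℕ} (hn : n ≠ 0) : {x : pruferSubgroup p | n • x = 0}.Finite :=
  ((AddCircle.finite_torsion (1 : ℚ) (Nat.pos_of_ne_zero hn)).subset
    (by rintro _ ⟨x, hx, rfl⟩; exact congrArg Subtype.val hx)).of_finite_image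
    Subtype.val_injective.injOn

lemma mem_zmultiples_of_addOrderOf_nsmul_eq_zero (hp : p.Prime) {x y : pruferSubgroup p}
    (h : addOrderOf x • y = 0) : y ∈ AddSubgroup.zmultiples x := by
  obtain ⟨k, hk⟩ := exists_addOrderOf_eq_pow hp x
  have hx : IsOfFinAddOrder (x : RatCircle) := by
    rw [← addOrderOf_pos_iff, AddSubgroup.addOrderOf_coe, hk]
    exact pow_pos hp.pos k
  have hy : addOrderOf (x : RatCircle) • (y : RatCircle) = 0 := by
    rw [AddSubgroup.addOrderOf_coe]
    exact congrArg Subtype.val h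
  obtain ⟨m, hm⟩ := RatCircle.mem_zmultiples_of_addOrderOf_nsmul_eq_zero hx hy
  exact ⟨m, Subtype.ext hm⟩

lemma exists_addOrderOf_eq (hp : p.Prime) : ∃ u : pruferSubgroup p, addOrderOf u = p := by
  have : Fact ((0 : ℚ) < 1) := ⟨one_pos⟩
  have horder := AddCircle.addOrderOf_period_div (p := (1 : ℚ)) hp.pos
  refine ⟨⟨((1 / p : ℚ) : RatCircle), 1, ?_⟩, ?_⟩
  · rw [pow_one]
    exact addOrderOf_dvd_iff_nsmul_eq_zero.1 horder.dvd
  · rw [← AddSubgroup.addOrderOf_coe]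
    exact horder

lemma isDivisible (hp : p.Prime) : IsDivisible (pruferSubgroup p) := by
  refine .of_prime fun q hq x ↦ ?_
  obtain ⟨n, hn⟩ := exists_pow_nsmul_eq_zero x
  obtain rfl | hqp := eq_or_ne q p
  · have hq0 : (q : ℤ) ≠ 0 := Int.natCast_ne_zero.2 hq.ne_zero
    obtain ⟨z, hz⟩ := DivisibleBy.surjective_smul (AddCircle (1 : ℚ)) ℤ hq0 (x : RatCircle)
    have hz : q • z = (x : RatCircle) := by simpa only [natCast_zsmul] using hz
    refine ⟨⟨z, n + 1, ?_⟩, Subtype.ext hz⟩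
    rw [pow_succ, mul_smul, hz]
    exact congrArg Subtype.val hn
  · obtain ⟨a, b, hab⟩ : IsCoprime (q : ℤ) ((p ^ n : ℕ) : ℤ) :=
      Nat.isCoprime_iff_coprime.2 (((Nat.coprime_primes hq hp).2 hqp).pow_right n)
    refine ⟨a • x, ?_⟩
    calc q • a • x = (a * q) • x + (b * (p ^ n : ℕ)) • x := by
          rw [mul_smul a, mul_smul b, natCast_zsmul, natCast_zsmul, hn, smul_zero, add_zero,
            smul_comm]
      _ = x := by rw [← add_smul, hab, one_smul]

lemma finite_of_ne_top (hp : p.Prime) {H : AddSubgroup (pruferSubgroup p)} (hH : H ≠ ⊤) :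
    (H : Set (pruferSubgroup p)).Finite := by
  obtain ⟨y, hy⟩ : ∃ y, y ∉ H := by simpa [AddSubgroup.eq_top_iff'] using hH
  obtain ⟨n, hn⟩ := exists_pow_nsmul_eq_zero y
  refine (finite_torsionBy p (pow_ne_zero n hp.ne_zero)).subset fun x hx ↦ ?_
  obtain ⟨k, hk⟩ := exists_addOrderOf_eq_pow hp x
  have hkn : k ≤ n := by
    by_contra! hlt
    have hxy : addOrderOf x • y = 0 := by
      rw [hk, ← Nat.sub_add_cancel hlt.le, pow_add, mul_smul, hn, smul_zero]
    exact hy (AddSubgroup.zmultiples_le_of_mem hx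
      (mem_zmultiples_of_addOrderOf_nsmul_eq_zero hp hxy))
  exact addOrderOf_dvd_iff_nsmul_eq_zero.1 (hk ▸ pow_dvd_pow p hkn)

lemma infinite (hp : p.Prime) : Infinite (pruferSubgroup p) := by
  by_contra hfin
  rw [not_infinite_iff_finite] at hfin
  obtain ⟨u, hu⟩ := exists_addOrderOf_eq hp
  have hu0 : u ≠ 0 := fun h ↦ hp.ne_one (by rw [← hu, h, addOrderOf_zero])
  obtain ⟨y, rfl⟩ := isDivisible hp (Nat.card (pruferSubgroup p)) Nat.card_pos.ne' u
  exact hu0 (card_nsmul_eq_zero' (x := y))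

end pruferSubgroup

/-! ### Černikov groups are the Artinian abelian groups -/

section Artinian

variable {A : Type*} [AddCommGroup A]

lemma isArtinian_of_forall_ne_top_finite
    (h : ∀ N : Submodule ℤ A, N ≠ ⊤ → (N : Set A).Finite) : IsArtinian ℤ A := by
  have hacc (N : Submodule ℤ A) (hN : (N : Set A).Finite) : Acc (· < ·) N := by
    induction hn : (N : Set A).ncard using Nat.strong_induction_on generalizing N with
    | _ n ih =>
      refine Acc.intro _ fun K hK ↦ ih _ ?_ K (hN.subset hK.le) rfl
      exact hn ▸ Set.ncard_lt_ncard (SetLike.coe_ssubset_coe.2 hK) hN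
  exact ⟨⟨fun N ↦ Acc.intro _ fun K hK ↦ hacc K (h K (hK.trans_le le_top).ne)⟩⟩

lemma pruferSubgroup.isArtinian {p : ℕ} (hp : p.Prime) : IsArtinian ℤ (pruferSubgroup p) :=
  isArtinian_of_forall_ne_top_finite fun N hN ↦ finite_of_ne_top hp (H := N.toAddSubgroup)
    fun h ↦ hN (Submodule.toAddSubgroup_injective h)

lemma isOfFinAddOrder_of_isArtinian [IsArtinian ℤ A] (a : A) : IsOfFinAddOrder a := by
  by_contra ha
  have hinj : Function.Injective (LinearMap.toSpanSingleton ℤ A a) :=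
    injective_zsmul_iff_not_isOfFinAddOrder.2 ha
  have : IsArtinianRing ℤ := isArtinian_of_injective _ hinj
  have h2 : IsUnit (2 : ℤ) :=
    IsArtinianRing.isUnit_of_mem_nonZeroDivisors (mem_nonZeroDivisors_of_ne_zero two_ne_zero)
  exact Int.prime_two.not_isUnit h2

lemma finite_of_isArtinian_of_nsmul_eq_zero [IsArtinian ℤ A] {m : ℕ} (hm : m ≠ 0)
    (h : ∀ a : A, m • a = 0) : Finite A := by
  let _ : Module (ZMod m) A := AddCommGroup.zmodModule h
  have : NeZero m := ⟨hm⟩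
  have : IsScalarTower ℤ (ZMod m) A :=
    ⟨fun x y z ↦ by rw [zsmul_eq_mul, mul_smul, Int.cast_smul_eq_zsmul]⟩
  have hart : IsArtinian (ZMod m) A := isArtinian_of_tower ℤ inferInstance
  have hfin : Module.Finite (ZMod m) A := ((IsArtinianRing.tfae (ZMod m) A).out 2 0).mp hart
  exact @Module.finite_of_finite (ZMod m) A _ _ _ _ hfin

lemma exists_addOrderOf_nsmul_prime {a : A} (ha : IsOfFinAddOrder a) (h0 : a ≠ 0) :
    ∃ c p : ℕ, p.Prime ∧ addOrderOf (c • a) = p := by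
  obtain ⟨p, hp, hpa⟩ := Nat.exists_prime_and_dvd (mt AddMonoid.addOrderOf_eq_one_iff.1 h0)
  exact ⟨addOrderOf a / p, p, hp, addOrderOf_nsmul_addOrderOf_sub ha.addOrderOf_pos.ne' hpa⟩

lemma IsDivisible.exists_pruferSubgroup_retract (hA : IsDivisible A) {a : A} {p : ℕ}
    (hp : p.Prime) (ha : addOrderOf a = p) :
    ∃ (i : pruferSubgroup p →+ A) (r : A →+ pruferSubgroup p), ∀ x, r (i x) = x := by
  obtain ⟨u, hu⟩ := pruferSubgroup.exists_addOrderOf_eq hp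
  obtain ⟨i, hi⟩ : ∃ i : pruferSubgroup p →+ A, i u = a :=
    hA.exists_addMonoidHom_apply_eq (by rw [hu, ← ha, addOrderOf_nsmul_eq_zero])
  have hinj : Function.Injective i := by
    refine (injective_iff_map_eq_zero i).2 fun y hy ↦ ?_
    by_contra hy0
    obtain ⟨k, hk⟩ := pruferSubgroup.exists_addOrderOf_eq_pow hp y
    have hk0 : k ≠ 0 := by
      rintro rfl
      exact hy0 (AddMonoid.addOrderOf_eq_one_iff.1 (hk.trans (pow_zero p)))
    have hyu : addOrderOf y • u = 0 := by
      rw [← addOrderOf_dvd_iff_nsmul_eq_zero, hu, hk]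
      exact dvd_pow_self p hk0
    obtain ⟨m, hm⟩ := pruferSubgroup.mem_zmultiples_of_addOrderOf_nsmul_eq_zero hp hyu
    have ha0 : a = 0 := by rw [← hi, ← hm]; simp [hy]
    exact hp.ne_one (by rw [← ha, ha0, addOrderOf_zero])
  obtain ⟨r, hr⟩ := (pruferSubgroup.isDivisible hp).baer.extension_property_addMonoidHom i hinj
    (AddMonoidHom.id _)
  exact ⟨i, r, DFunLike.congr_fun hr⟩

lemma IsDivisible.exists_addEquiv_pruferSubgroup_prod [IsArtinian ℤ A] [Nontrivial A]
    (hA : IsDivisible A) : ∃ p : ℕ, p.Prime ∧ ∃ K : Submodule ℤ A, K < ⊤ ∧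
      Nonempty (A ≃+ pruferSubgroup p × K) := by
  obtain ⟨x, hx0⟩ := exists_ne (0 : A)
  obtain ⟨c, p, hp, hcx⟩ := exists_addOrderOf_nsmul_prime (isOfFinAddOrder_of_isArtinian x) hx0
  obtain ⟨i, r, hir⟩ := hA.exists_pruferSubgroup_retract hp hcx
  let K : Submodule ℤ A := LinearMap.ker r.toIntLinearMap
  have hK : K ≠ ⊤ := fun htop ↦ by
    obtain ⟨u, hu⟩ := pruferSubgroup.exists_addOrderOf_eq hp
    have hu0 : u = 0 := by
      rw [← hir u]
      exact LinearMap.mem_ker.1 (htop.ge (Submodule.mem_top (x := i u)))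
    exact hp.ne_one (by rw [← hu, hu0, addOrderOf_zero])
  have hexact : Function.Exact K.subtype r.toIntLinearMap := r.toIntLinearMap.exact_subtype_ker_map
  obtain ⟨e, -, -⟩ := hexact.splitSurjectiveEquiv K.subtype_injective
    ⟨i.toIntLinearMap, LinearMap.ext hir⟩
  exact ⟨p, hp, K, lt_top_iff_ne_top.2 hK, ⟨e.toAddEquiv.trans AddEquiv.prodComm⟩⟩

lemma IsDivisible.exists_addEquiv_pi_pruferSubgroup [IsArtinian ℤ A] {N : Submodule ℤ A}
    (hN : IsDivisible N) : ∃ (r : ℕ) (p : Fin r → ℕ), (∀ i, (p i).Prime) ∧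
      Nonempty (N ≃+ ((i : Fin r) → pruferSubgroup (p i))) := by
  induction N using WellFoundedLT.induction with
  | _ N ih =>
    obtain hN0 | hN0 := subsingleton_or_nontrivial N
    · exact ⟨0, Fin.elim0, fun i ↦ i.elim0, ⟨⟨⟨0, 0, fun _ ↦ Subsingleton.elim _ _,
        fun _ ↦ Subsingleton.elim _ _⟩, fun _ _ ↦ Subsingleton.elim _ _⟩⟩⟩
    obtain ⟨p, hp, K, hK, ⟨e⟩⟩ := hN.exists_addEquiv_pruferSubgroup_prod
    have hKN : K.map N.subtype < N :=
      (Submodule.map_strictMono_of_injective N.subtype_injective hK).trans_eq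
        (Submodule.map_subtype_top N)
    let eK : K ≃+ K.map N.subtype :=
      (K.equivMapOfInjective N.subtype N.subtype_injective).toAddEquiv
    have hdiv : IsDivisible (K.map N.subtype) :=
      hN.of_surjective (f := eK.toAddMonoidHom.comp ((AddMonoidHom.snd _ _).comp e.toAddMonoidHom))
        (eK.surjective.comp (Prod.snd_surjective.comp e.surjective))
    obtain ⟨n, q, hq, ⟨f⟩⟩ := ih _ hKN hdiv
    let cons := Fin.consLinearEquiv ℤ fun j ↦ pruferSubgroup ((Fin.cons p q : Fin (n + 1) → ℕ) j)
    exact ⟨n + 1, Fin.cons p q, Fin.cases hp hq,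
      ⟨(e.trans ((AddEquiv.refl _).prodCongr (eK.trans f))).trans cons.toAddEquiv⟩⟩

lemma exists_nsmul_range_isDivisible (R A : Type*) [CommRing R] [AddCommGroup A] [Module R A]
    [IsArtinian R A] : ∃ m : ℕ, m ≠ 0 ∧ IsDivisible (LinearMap.range (LinearMap.lsmul R A m)) := by
  obtain ⟨_, ⟨m, hm, rfl⟩, hmin⟩ := IsArtinian.set_has_minimal
    {N | ∃ m : ℕ, m ≠ 0 ∧ LinearMap.range (LinearMap.lsmul R A m) = N} ⟨_, 1, one_ne_zero, rfl⟩
  refine ⟨m, hm, fun k hk ⟨_, x, rfl⟩ ↦ ?_⟩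
  have hle : LinearMap.range (LinearMap.lsmul R A (k * m : ℕ)) ≤
      LinearMap.range (LinearMap.lsmul R A m) := by
    rintro _ ⟨y, rfl⟩
    exact ⟨(k : R) • y, by simp [mul_smul, smul_comm (k : R)]⟩
  obtain ⟨y, hy⟩ := (eq_of_le_of_not_lt hle (hmin _ ⟨_, mul_ne_zero hk hm, rfl⟩)).ge ⟨x, rfl⟩
  refine ⟨⟨(m : R) • y, y, rfl⟩, Subtype.ext ?_⟩
  change k • (m : R) • y = (m : R) • x
  rwa [LinearMap.lsmul_apply, Nat.cast_mul, mul_smul, Nat.cast_smul_eq_nsmul] at hy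

lemma isCernikov_iff_isArtinian : IsCernikov A ↔ IsArtinian ℤ A := by
  constructor
  · rintro ⟨S, r, p, hS, hp, ⟨e⟩⟩
    have (i : Fin r) : IsArtinian ℤ (pruferSubgroup (p i)) := pruferSubgroup.isArtinian (hp i)
    have : IsArtinian ℤ (AddSubgroup.toIntSubmodule S) :=
      isArtinian_of_injective (e.toAddMonoidHom.toIntLinearMap : S →ₗ[ℤ] _) e.injective
    have : S.FiniteIndex := ⟨hS⟩
    have : Finite (A ⧸ AddSubgroup.toIntSubmodule S) :=
      inferInstanceAs (Finite (A ⧸ S))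
    exact (isArtinian_iff_submodule_quotient (AddSubgroup.toIntSubmodule S)).2
      ⟨inferInstance, inferInstance⟩
  · intro
    obtain ⟨m, hm, hdiv⟩ := exists_nsmul_range_isDivisible ℤ A
    obtain ⟨r, p, hp, e⟩ := hdiv.exists_addEquiv_pi_pruferSubgroup
    refine ⟨(LinearMap.range (LinearMap.lsmul ℤ A m)).toAddSubgroup, r, p, ?_, hp, e⟩
    have : Finite (A ⧸ LinearMap.range (LinearMap.lsmul ℤ A m)) := by
      refine finite_of_isArtinian_of_nsmul_eq_zero hm fun a ↦ ?_
      obtain ⟨a, rfl⟩ := Submodule.Quotient.mk_surjective _ a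
      rw [← Submodule.Quotient.mk_smul, Submodule.Quotient.mk_eq_zero]
      exact ⟨a, natCast_zsmul a m⟩
    have : Finite (A ⧸ (LinearMap.range (LinearMap.lsmul ℤ A m)).toAddSubgroup) := this
    exact AddSubgroup.finiteIndex_of_finite_quotient.index_ne_zero

end Artinian

/-! ### Closure properties of Černikov `ω`-groups -/

/-- A `π`-number: a positive integer all of whose prime divisors lie in `π`. -/
def IsPiNumber (π : Set ℕ) (n : ℕ) : Prop :=
  n ≠ 0 ∧ ∀ p : ℕ, p.Prime → p ∣ n → p ∈ π

namespace IsPiNumber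

variable {π : Set ℕ} {m n : ℕ}

lemma one : IsPiNumber π 1 :=
  ⟨one_ne_zero, fun _ hp h ↦ (hp.not_dvd_one h).elim⟩

lemma mul (hm : IsPiNumber π m) (hn : IsPiNumber π n) : IsPiNumber π (m * n) :=
  ⟨mul_ne_zero hm.1 hn.1, fun p hp h ↦ (hp.dvd_mul.1 h).elim (hm.2 p hp) (hn.2 p hp)⟩

lemma of_dvd (hn : IsPiNumber π n) (h : m ∣ n) : IsPiNumber π m :=
  ⟨ne_zero_of_dvd_ne_zero hn.1 h, fun p hp hpm ↦ hn.2 p hp (hpm.trans h)⟩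

lemma of_prime {p : ℕ} (hp : p.Prime) (h : p ∈ π) : IsPiNumber π p :=
  ⟨hp.ne_zero, fun _ hq hqp ↦ (Nat.prime_dvd_prime_iff_eq hq hp).1 hqp ▸ h⟩

lemma exists_eq_mul (π : Set ℕ) {n : ℕ} (hn : n ≠ 0) :
    ∃ a b : ℕ, n = a * b ∧ IsPiNumber π a ∧ IsPiNumber πᶜ b := by
  induction n using induction_on_primes with
  | zero => exact (hn rfl).elim
  | one => exact ⟨1, 1, rfl, one, one⟩
  | prime_mul p n hp ih =>
    obtain ⟨a, b, rfl, ha, hb⟩ := ih (right_ne_zero_of_mul hn)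
    by_cases h : p ∈ π
    · exact ⟨p * a, b, (mul_assoc ..).symm, (of_prime hp h).mul ha, hb⟩
    · exact ⟨a, p * b, mul_left_comm .., ha, (of_prime hp h).mul hb⟩

lemma coprime (hm : IsPiNumber π m) (hn : IsPiNumber πᶜ n) : m.Coprime n :=
  Nat.coprime_of_dvd fun p hp hpm hpn ↦ hn.2 p hp hpn (hm.2 p hp hpm)

lemma exists_dvd_pow (hm : IsPiNumber {p | p ∣ n} m) (hn : n ≠ 0) : ∃ k, m ∣ n ^ k :=
  (Nat.exists_dvd_pow_iff hm.1 hn).2 fun p hp ↦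
    Nat.mem_primeFactors.2 ⟨Nat.prime_of_mem_primeFactors hp,
      hm.2 p (Nat.prime_of_mem_primeFactors hp) (Nat.dvd_of_mem_primeFactors hp), hn⟩

end IsPiNumber

lemma isOmegaTorsion_iff {ω : Set ℕ} {A : Type*} [AddGroup A] :
    IsOmegaTorsion ω A ↔ ∀ a : A, ∃ n : ℕ, IsPiNumber ω n ∧ n • a = 0 := by
  refine forall_congr' fun a ↦ ⟨fun ⟨hfin, h⟩ ↦ ?_, fun ⟨n, hn, h⟩ ↦ ?_⟩
  · exact ⟨addOrderOf a, ⟨hfin.addOrderOf_pos.ne', fun p hp hd ↦ h p hp (by exact_mod_cast hd)⟩,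
      addOrderOf_nsmul_eq_zero a⟩
  · have hord := hn.of_dvd (addOrderOf_dvd_of_nsmul_eq_zero h)
    exact ⟨addOrderOf_pos_iff.1 (Nat.pos_of_ne_zero hord.1),
      fun p hp hd ↦ hord.2 p hp (by exact_mod_cast hd)⟩

lemma isCernikovOmega_iff {ω : Set ℕ} {A : Type*} [AddCommGroup A] :
    IsCernikovOmega ω A ↔ IsArtinian ℤ A ∧ ∀ a : A, ∃ n : ℕ, IsPiNumber ω n ∧ n • a = 0 :=
  and_congr isCernikov_iff_isArtinian isOmegaTorsion_iff

namespace IsCernikovOmega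

variable {ω : Set ℕ} {X Y Z : Type*} [AddCommGroup X] [AddCommGroup Y] [AddCommGroup Z]

lemma isArtinian (h : IsCernikovOmega ω X) : IsArtinian ℤ X :=
  (isCernikovOmega_iff.1 h).1

lemma of_subsingleton [Subsingleton X] : IsCernikovOmega ω X :=
  isCernikovOmega_iff.2 ⟨inferInstance, fun _ ↦ ⟨1, .one, Subsingleton.elim _ _⟩⟩

lemma of_exact {f : X →+ Y} {g : Y →+ Z} (h : Function.Exact f g) (hX : IsCernikovOmega ω X)
    (hZ : IsCernikovOmega ω Z) : IsCernikovOmega ω Y := by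
  rw [isCernikovOmega_iff] at *
  have := hX.1
  have := hZ.1
  constructor
  · have hker : IsArtinian ℤ (LinearMap.ker g.toIntLinearMap) := by
      rw [(show Function.Exact f.toIntLinearMap g.toIntLinearMap from h).linearMap_ker_eq]
      infer_instance
    exact isArtinian_of_range_eq_ker (LinearMap.ker g.toIntLinearMap).subtype g.toIntLinearMap
      (Submodule.range_subtype _)
  · intro y
    obtain ⟨n, hn, hny⟩ := hZ.2 (g y)
    obtain ⟨x, hx⟩ := (h (n • y)).1 (by rw [map_nsmul, hny])
    obtain ⟨m, hm, hmx⟩ := hX.2 x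
    exact ⟨m * n, hm.mul hn, by rw [mul_smul, ← hx, ← map_nsmul, hmx, map_zero]⟩

lemma of_surjective (hX : IsCernikovOmega ω X) {f : X →+ Y} (hf : Function.Surjective f) :
    IsCernikovOmega ω Y :=
  of_exact (g := (0 : Y →+ PUnit.{1})) (fun y ↦ ⟨fun _ ↦ hf y, fun _ ↦ rfl⟩) hX of_subsingleton

lemma of_injective (hY : IsCernikovOmega ω Y) {f : X →+ Y} (hf : Function.Injective f) :
    IsCernikovOmega ω X :=
  of_exact (f := (0 : PUnit.{1} →+ X))
    (fun x ↦ (map_eq_zero_iff f hf).trans (by simp [eq_comm])) of_subsingleton hY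

lemma of_addEquiv (hX : IsCernikovOmega ω X) (e : X ≃+ Y) : IsCernikovOmega ω Y :=
  hX.of_surjective (f := e.toAddMonoidHom) e.surjective

lemma pi {ι : Type*} [Finite ι] (hX : IsCernikovOmega ω X) : IsCernikovOmega ω (ι → X) := by
  have := Fintype.ofFinite ι
  rw [isCernikovOmega_iff] at hX ⊢
  have := hX.1
  refine ⟨inferInstance, fun a ↦ ?_⟩
  choose n hn hna using fun i ↦ hX.2 (a i)
  refine ⟨∏ i, n i, Finset.prod_induction _ (IsPiNumber ω) (fun _ _ ↦ .mul) .one fun i _ ↦ hn i,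
    funext fun i ↦ ?_⟩
  obtain ⟨c, hc⟩ := Finset.dvd_prod_of_mem n (Finset.mem_univ i)
  rw [Pi.smul_apply, hc, mul_comm, mul_smul, hna, smul_zero, Pi.zero_apply]

end IsCernikovOmega

lemma exists_forall_pow_nsmul_pi_pruferSubgroup_eq_zero {r : ℕ} (p : Fin r → ℕ)
    (x : (i : Fin r) → pruferSubgroup (p i)) : ∃ n : ℕ, (∏ i, p i) ^ n • x = 0 := by
  choose n hn using fun i ↦ pruferSubgroup.exists_pow_nsmul_eq_zero (x i)
  refine ⟨∑ i, n i, funext fun i ↦ ?_⟩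
  have hdvd : p i ^ n i ∣ (∏ i, p i) ^ ∑ i, n i :=
    (pow_dvd_pow_of_dvd (Finset.dvd_prod_of_mem p (Finset.mem_univ i)) _).trans
      (pow_dvd_pow _ (Finset.single_le_sum (fun _ _ ↦ Nat.zero_le _) (Finset.mem_univ i)))
  obtain ⟨c, hc⟩ := hdvd
  rw [Pi.smul_apply, hc, mul_comm, mul_smul, hn, smul_zero, Pi.zero_apply]

lemma IsCernikov.exists_forall_pow_nsmul_eq_zero {A : Type*} [AddCommGroup A] (hA : IsCernikov A) :
    ∃ N : ℕ, N ≠ 0 ∧ ∀ a : A, ∃ n : ℕ, N ^ n • a = 0 := by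
  obtain ⟨S, r, p, hS, hp, ⟨e⟩⟩ := hA
  refine ⟨S.index * ∏ i, p i, mul_ne_zero hS (Finset.prod_ne_zero_iff.2 fun i _ ↦ (hp i).ne_zero),
    fun a ↦ ?_⟩
  obtain ⟨n, hn⟩ := exists_forall_pow_nsmul_pi_pruferSubgroup_eq_zero p
    (e ⟨S.index • a, S.nsmul_index_mem a⟩)
  rw [← map_nsmul, map_eq_zero_iff e e.injective] at hn
  have hn : (∏ i, p i) ^ n • S.index • a = 0 := congrArg Subtype.val hn
  have hpow : (S.index * ∏ i, p i) ^ (n + 1) =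
      (S.index ^ n * ∏ i, p i) * ((∏ i, p i) ^ n * S.index) := by ring
  exact ⟨n + 1, by rw [hpow, mul_smul, mul_smul ((∏ i, p i) ^ n), hn, smul_zero]⟩

/-! ### Prüfer quotients and the spectrum -/

/-- The additive group `A` maps onto the quasicyclic `p`-group. As that group is injective, this is
the same as having a quasicyclic `p`-section. -/
def HasPruferQuotient (p : ℕ) (A : Type*) [AddCommGroup A] : Prop :=
  ∃ f : A →+ pruferSubgroup p, Function.Surjective f

namespace HasPruferQuotient

variable {p : ℕ} {A B : Type*} [AddCommGroup A] [AddCommGroup B]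

lemma of_surjective {f : A →+ B} (hf : Function.Surjective f) (h : HasPruferQuotient p B) :
    HasPruferQuotient p A := by
  obtain ⟨g, hg⟩ := h
  exact ⟨g.comp f, hg.comp hf⟩

lemma of_injective (hp : p.Prime) {f : A →+ B} (hf : Function.Injective f)
    (h : HasPruferQuotient p A) : HasPruferQuotient p B := by
  obtain ⟨g, hg⟩ := h
  obtain ⟨g', rfl⟩ := (pruferSubgroup.isDivisible hp).baer.extension_property_addMonoidHom f hf g
  exact ⟨g', .of_comp (g := f) hg⟩

lemma finite_range_of_not (hp : p.Prime) (h : ¬ HasPruferQuotient p A) (f : A →+ pruferSubgroup p) :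
    (Set.range f).Finite :=
  pruferSubgroup.finite_of_ne_top hp (H := f.range)
    fun hf ↦ h ⟨f, AddMonoidHom.range_eq_top.1 hf⟩

lemma of_pi {ι : Type*} [Finite ι] (hp : p.Prime) (h : HasPruferQuotient p (ι → A)) :
    HasPruferQuotient p A := by
  classical
  have := Fintype.ofFinite ι
  obtain ⟨f, hf⟩ := h
  let g (i : ι) : A →+ pruferSubgroup p := f.comp (AddMonoidHom.single (fun _ ↦ A) i)
  by_contra hA
  have hfin : (Set.univ.pi fun i ↦ Set.range (g i)).Finite :=
    .pi fun i ↦ finite_range_of_not hp hA (g i)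
  have hsum : Set.range f ⊆ (fun y : ι → pruferSubgroup p ↦ ∑ i, y i) ''
      Set.univ.pi fun i ↦ Set.range (g i) := by
    rintro _ ⟨x, rfl⟩
    refine ⟨fun i ↦ g i (x i), fun i _ ↦ ⟨x i, rfl⟩, ?_⟩
    conv_rhs => rw [← Finset.univ_sum_single x, map_sum]
    rfl
  have := pruferSubgroup.infinite hp
  exact Set.infinite_univ (hf.range_eq ▸ (hfin.image _).subset hsum :)

end HasPruferQuotient

lemma hasQuasicyclicSection_iff {p : ℕ} {A : Type*} [AddCommGroup A] (hp : p.Prime) :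
    HasQuasicyclicSection (Multiplicative A) p ↔ HasPruferQuotient p A := by
  constructor
  · rintro ⟨H, K, hK, ⟨e⟩⟩
    let f : H →* Multiplicative (pruferSubgroup p) := e.toMonoidHom.comp (QuotientGroup.mk' K)
    have hf : Function.Surjective f := e.surjective.comp (QuotientGroup.mk'_surjective K)
    exact .of_injective hp (A := Additive H) (f := H.subtype.toAdditive) H.subtype_injective
      ⟨f.toAdditive, hf⟩
  · rintro ⟨f, hf⟩
    let g : (⊤ : Subgroup (Multiplicative A)) →* Multiplicative (pruferSubgroup p) :=
      (AddMonoidHom.toMultiplicative f).comp (Subgroup.subtype ⊤)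
    have hg : Function.Surjective g := fun y ↦ by
      obtain ⟨a, ha⟩ := hf y
      exact ⟨⟨a, trivial⟩, ha⟩
    exact ⟨⊤, g.ker, inferInstance, ⟨QuotientGroup.quotientKerEquivOfSurjective g hg⟩⟩

lemma addSpectrum_subset_iff {π : Set ℕ} {A : Type*} [AddCommGroup A] :
    addSpectrum A ⊆ π ↔ ∀ p : ℕ, p.Prime → HasPruferQuotient p A → p ∈ π :=
  ⟨fun h _ hp hA ↦ h ⟨hp, (hasQuasicyclicSection_iff hp).2 hA⟩,
    fun h p hp ↦ h p hp.1 ((hasQuasicyclicSection_iff hp.1).1 hp.2)⟩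

/-! ### Torsion-free groups of finite rank and their quotients -/

section FiniteRank

universe u

variable {A : Type u} [AddCommGroup A]

lemma rank_lt_aleph0_iff : Module.rank ℤ A < Cardinal.aleph0 ↔
    ∃ n : ℕ, ∀ k : ℕ, (∃ f : (Fin k →₀ ℤ) →+ A, Function.Injective f) → k ≤ n := by
  have hle (k : ℕ) : (k : Cardinal) ≤ Module.rank ℤ A ↔
      ∃ f : (Fin k →₀ ℤ) →+ A, Function.Injective f := by
    let e := Finsupp.linearEquivFunOnFinite ℤ ℤ (Fin k)
    rw [Module.le_rank_iff_exists_linearMap]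
    constructor
    · rintro ⟨f, hf⟩
      exact ⟨(f ∘ₗ e.toLinearMap).toAddMonoidHom, hf.comp e.injective⟩
    · rintro ⟨f, hf⟩
      exact ⟨f.toIntLinearMap ∘ₗ e.symm.toLinearMap, hf.comp e.symm.injective⟩
  constructor
  · intro h
    obtain ⟨n, hn⟩ := Cardinal.lt_aleph0.1 h
    exact ⟨n, fun k hk ↦ Nat.cast_le.1 (((hle k).2 hk).trans_eq hn)⟩
  · rintro ⟨n, hn⟩
    by_contra! h
    exact (hn (n + 1) ((hle _).1 (Cardinal.natCast_le_aleph0.trans h))).not_gt n.lt_succ_self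

lemma exists_finite_forall_smul_mem_span (hA : Module.rank ℤ A < Cardinal.aleph0) :
    ∃ s : Set A, s.Finite ∧ ∀ a, ∃ m : ℕ, m ≠ 0 ∧ m • a ∈ Submodule.span ℤ s := by
  obtain ⟨s, hs, hli⟩ := exists_set_linearIndependent_of_isDomain ℤ A
  have hrank : Module.rank ℤ (Submodule.span ℤ s) = Module.rank ℤ A := by
    rw [rank_span_set hli, hs]
  have htors : Module.IsTorsion ℤ (A ⧸ Submodule.span ℤ s) := by
    have h := rank_quotient_add_rank_of_isDomain (Submodule.span ℤ s)
    rw [hrank] at h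
    exact Module.rank_eq_zero_iff_isTorsion.1
      (Cardinal.eq_of_add_eq_add_right (h.trans (zero_add _).symm) hA)
  refine ⟨s, Cardinal.lt_aleph0_iff_set_finite.1 (hs ▸ hA), fun a ↦ ?_⟩
  obtain ⟨m, hm⟩ := @htors (Submodule.Quotient.mk a)
  refine ⟨(m : ℤ).natAbs, Int.natAbs_ne_zero.2 (nonZeroDivisors.ne_zero m.2), ?_⟩
  have hmem : (m : ℤ) • a ∈ Submodule.span ℤ s := (Submodule.Quotient.mk_eq_zero _).1 hm
  obtain ⟨c, hc⟩ := Int.dvd_natAbs_self (a := m)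
  rw [← natCast_zsmul, hc, mul_comm, mul_smul]
  exact Submodule.smul_mem _ c hmem

lemma rank_pi_lt_aleph0 (hA : Module.rank ℤ A < Cardinal.aleph0) (ι : Type) [Finite ι] :
    Module.rank ℤ (ι → A) < Cardinal.aleph0 := by
  induction ι using Finite.induction_empty_option with
  | of_equiv e h => exact (LinearEquiv.funCongrLeft ℤ A e).rank_eq.trans_lt h
  | h_empty => exact (rank_subsingleton' ℤ _).trans_lt Cardinal.aleph0_pos
  | @h_option ι _ ih =>
    let f : (Option ι → A) →ₗ[ℤ] A := .proj none
    let g : LinearMap.ker f →ₗ[ℤ] (ι → A) := .funLeft ℤ A some ∘ₗ (LinearMap.ker f).subtype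
    have hg : Function.Injective g := fun x y hxy ↦ Subtype.ext <| funext fun
      | none => x.2.trans y.2.symm
      | some i => congrFun hxy i
    rw [← LinearMap.rank_range_add_rank_ker f]
    exact Cardinal.add_lt_aleph0 ((LinearMap.range f).rank_le.trans_lt hA)
      ((LinearMap.rank_le_of_injective g hg).trans_lt ih)

variable [IsAddTorsionFree A]

/-- Finitely many elements of `Q` lift into a free group of rank at most `r = rank A`, so there are
at most `m ^ r` of them. -/
lemma finite_of_surjective_of_module_zmod (hA : Module.rank ℤ A < Cardinal.aleph0) {m : ℕ}
    [NeZero m] {Q : Type*} [AddCommGroup Q] [Module (ZMod m) Q] {f : A →+ Q}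
    (hf : Function.Surjective f) : Finite Q := by
  classical
  obtain ⟨r, hr⟩ := Cardinal.lt_aleph0.1 hA
  by_contra hinf
  have : Infinite Q := not_finite_iff_infinite.1 hinf
  obtain ⟨S, hS⟩ := Infinite.exists_subset_card_eq Q (m ^ r + 1)
  obtain ⟨a, ha⟩ := hf.hasRightInverse
  let L : Submodule ℤ A := Submodule.span ℤ (a '' S)
  have : Module.Finite ℤ L := .span_of_finite ℤ (S.finite_toSet.image a)
  let b := Module.finBasis ℤ L
  have hrank : Module.finrank ℤ L ≤ r := Module.finrank_le_of_rank_le (hr ▸ L.rank_le)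
  let g := Fintype.linearCombination (ZMod m) fun i ↦ f (b i)
  have hspan : (S : Set Q) ⊆ Set.range ⇑g := by
    intro q hq
    let l : L := ⟨a q, Submodule.subset_span ⟨q, hq, rfl⟩⟩
    refine ⟨fun i ↦ (b.repr l i : ZMod m), ?_⟩
    rw [Fintype.linearCombination_apply]
    calc ∑ i, ((b.repr l i : ℤ) : ZMod m) • f (b i)
        = f (∑ i, b.repr l i • b i : L) := by
          simp only [Int.cast_smul_eq_zsmul, AddSubmonoidClass.coe_finsetSum, map_sum,
            SetLike.val_smul, map_zsmul]
      _ = q := by rw [b.sum_repr, ha]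
  have hcard : m ^ r + 1 ≤ m ^ Module.finrank ℤ L := calc
    m ^ r + 1 = Set.ncard (S : Set Q) := by rw [Set.ncard_coe_finset, hS]
    _ ≤ (Set.range g).ncard :=
      Set.ncard_le_ncard hspan (Set.finite_range _)
    _ ≤ Nat.card (Fin (Module.finrank ℤ L) → ZMod m) := by
      rw [← Set.image_univ, ← Set.ncard_univ]
      exact Set.ncard_image_le
    _ = m ^ Module.finrank ℤ L := by simp
  exact (hcard.trans (Nat.pow_le_pow_right (NeZero.pos m) hrank)).not_gt
    (Nat.lt_succ_self _)

lemma finite_setOf_nsmul_eq_zero (hA : Module.rank ℤ A < Cardinal.aleph0) {T : Type*}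
    [AddCommGroup T] {f : A →+ T} (hf : Function.Surjective f) {m : ℕ} (hm : m ≠ 0) :
    {t : T | m • t = 0}.Finite := by
  have hK : Module.rank ℤ f.ker < Cardinal.aleph0 :=
    (LinearMap.rank_le_of_injective f.ker.subtype.toIntLinearMap f.ker.subtype_injective).trans_lt
      hA
  have : IsAddTorsionFree f.ker := f.ker.subtype_injective.isAddTorsionFree f.ker.subtype
  let mK : AddSubgroup f.ker := (nsmulAddMonoidHom m).range
  have hfin : Finite (f.ker ⧸ mK) := by
    have : NeZero m := ⟨hm⟩
    let _ : Module (ZMod m) (f.ker ⧸ mK) := AddCommGroup.zmodModule <| by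
      rintro ⟨x⟩
      exact (QuotientAddGroup.eq_zero_iff _).2 ⟨x, rfl⟩
    exact finite_of_surjective_of_module_zmod (m := m) hK (QuotientAddGroup.mk'_surjective mK)
  obtain ⟨s, hs⟩ := hf.hasRightInverse
  let c (t : {t : T | m • t = 0}) : f.ker ⧸ mK :=
    QuotientAddGroup.mk ⟨m • s t, by rw [AddMonoidHom.mem_ker, map_nsmul, hs]; exact t.2⟩
  refine Set.finite_coe_iff.1 (Finite.of_injective c fun t t' h ↦ Subtype.ext ?_)
  obtain ⟨x, hx⟩ := QuotientAddGroup.eq.1 h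
  have hx' : (x : A) = s t' - s t := nsmul_right_injective hm <|
    (congrArg Subtype.val hx).trans (.trans (neg_add_eq_sub _ _) (smul_sub m _ _).symm)
  have hft := x.2
  rw [AddMonoidHom.mem_ker, hx', map_sub, hs, hs, sub_eq_zero] at hft
  exact hft.symm

end FiniteRank

lemma finite_setOf_exists_pow_nsmul_eq_zero {T : Type*} [AddCommGroup T] {N : ℕ}
    (hN0 : N ≠ 0) (hN : {t : T | N • t = 0}.Finite)
    (hT : ∀ p : ℕ, p.Prime → p ∣ N → ¬ HasPruferQuotient p T) :
    {t : T | ∃ n : ℕ, N ^ n • t = 0}.Finite := by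
  let S := {t : T // N • t = 0 ∧ (addOrderOf t).Prime}
  have : Finite S := (hN.subset fun t (ht : N • t = 0 ∧ _) ↦ ht.1).to_subtype
  have hdual (x : S) : ∃ f : T →+ pruferSubgroup (addOrderOf x.1),
      f x.1 ≠ 0 ∧ (Set.range f).Finite := by
    have hp := x.2.2
    obtain ⟨u, hu⟩ := pruferSubgroup.exists_addOrderOf_eq hp
    obtain ⟨f, hf⟩ := (pruferSubgroup.isDivisible hp).exists_addMonoidHom_apply_eq
      (a := x.1) (d := u) (addOrderOf_dvd_iff_nsmul_eq_zero.1 hu.dvd)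
    refine ⟨f, fun h0 ↦ hp.ne_one ?_, HasPruferQuotient.finite_range_of_not hp
      (hT _ hp (addOrderOf_dvd_iff_nsmul_eq_zero.2 x.2.1)) f⟩
    rw [← hu, ← hf, h0, addOrderOf_zero]
  choose f hf hfin using hdual
  let Φ (t : T) (x : S) : pruferSubgroup (addOrderOf x.1) := f x t
  refine Set.Finite.of_injOn (f := Φ) (t := Set.univ.pi fun x ↦ Set.range (f x))
    (fun t _ x _ ↦ Set.mem_range_self t) ?_ (.pi fun x ↦ hfin x)
  rintro t ⟨n, hn⟩ t' ⟨n', hn'⟩ htt'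
  by_contra hne
  have hu : N ^ (n' + n) • (t - t') = 0 := by
    rw [smul_sub, pow_add, mul_smul, hn, mul_comm, mul_smul, hn', smul_zero, smul_zero, sub_zero]
  obtain ⟨c, p, hp, hcp⟩ := exists_addOrderOf_nsmul_prime
    (isOfFinAddOrder_iff_nsmul_eq_zero.2 ⟨_, Nat.pos_of_ne_zero (pow_ne_zero _ hN0), hu⟩)
    (sub_ne_zero.2 hne)
  have hpN : p ∣ N := hp.dvd_of_dvd_pow <| hcp ▸
    addOrderOf_dvd_iff_nsmul_eq_zero.2 (by rw [smul_comm, hu, smul_zero])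
  let x : S := ⟨c • (t - t'), addOrderOf_dvd_iff_nsmul_eq_zero.1 (hcp ▸ hpN), hcp ▸ hp⟩
  refine hf x ?_
  rw [map_nsmul, map_sub, sub_eq_zero.2 (congrFun htt' x), smul_zero]

/-- The additive group `A` is torsion-free, of finite rank and `π`-spectral, the rank being that of
`A` as a `ℤ`-module. -/
structure IsNiceGroup (π : Set ℕ) (A : Type*) [AddCommGroup A] : Prop where
  isAddTorsionFree : IsAddTorsionFree A
  rank_lt_aleph0 : Module.rank ℤ A < Cardinal.aleph0
  mem_of_hasPruferQuotient : ∀ p : ℕ, p.Prime → HasPruferQuotient p A → p ∈ π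

namespace IsNiceGroup

universe u

variable {π : Set ℕ} {A M : Type u} [AddCommGroup A] [AddCommGroup M]

lemma iff_finiteRankAbelian : IsNiceGroup π A ↔
    (∀ a : A, a ≠ 0 → ¬ IsOfFinAddOrder a) ∧ FiniteRankAbelian A ∧ addSpectrum A ⊆ π := by
  constructor
  · rintro ⟨htf, hrank, hspec⟩
    refine ⟨isAddTorsionFree_iff_not_isOfFinAddOrder.1 htf, ⟨rank_lt_aleph0_iff.1 hrank,
      fun p hp ↦ ?_⟩, addSpectrum_subset_iff.2 hspec⟩
    simp only [nsmul_eq_zero_iff_right hp.ne_zero, Set.ofPred_eq_eq_singleton, Set.finite_singleton]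
  · rintro ⟨htf, ⟨hrank, -⟩, hspec⟩
    exact ⟨isAddTorsionFree_iff_not_isOfFinAddOrder.2 htf, rank_lt_aleph0_iff.2 hrank,
      addSpectrum_subset_iff.1 hspec⟩

lemma of_injective (hM : IsNiceGroup π M) {f : A →+ M} (hf : Function.Injective f) :
    IsNiceGroup π A where
  isAddTorsionFree := have := hM.isAddTorsionFree; hf.isAddTorsionFree f
  rank_lt_aleph0 :=
    (LinearMap.rank_le_of_injective f.toIntLinearMap hf).trans_lt hM.rank_lt_aleph0
  mem_of_hasPruferQuotient p hp h := hM.mem_of_hasPruferQuotient p hp (h.of_injective hp hf)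

lemma pi (hA : IsNiceGroup π A) (ι : Type) [Finite ι] : IsNiceGroup π (ι → A) where
  isAddTorsionFree := have := hA.isAddTorsionFree; inferInstance
  rank_lt_aleph0 := rank_pi_lt_aleph0 hA.rank_lt_aleph0 ι
  mem_of_hasPruferQuotient p hp h := hA.mem_of_hasPruferQuotient p hp (h.of_pi hp)

lemma of_pow_nsmul_mem_range [IsAddTorsionFree M] (hA : IsNiceGroup π A) {i : A →+ M}
    (hi : Function.Injective i) {N : ℕ} (hN : IsPiNumber π N)
    (h : ∀ x, ∃ n : ℕ, N ^ n • x ∈ i.range) : IsNiceGroup π M where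
  isAddTorsionFree := inferInstance
  rank_lt_aleph0 := by
    have htors : Module.IsTorsion ℤ (M ⧸ LinearMap.range i.toIntLinearMap) := by
      rintro ⟨x⟩
      obtain ⟨n, a, ha⟩ := h x
      exact ⟨⟨((N ^ n : ℕ) : ℤ), mem_nonZeroDivisors_of_ne_zero
        (Nat.cast_ne_zero.2 (pow_ne_zero n hN.1))⟩, (Submodule.Quotient.mk_eq_zero _).2
          ⟨a, ha.trans (natCast_zsmul _ _).symm⟩⟩
    rw [← rank_quotient_add_rank_of_isDomain (LinearMap.range i.toIntLinearMap),
      Module.rank_eq_zero_iff_isTorsion.2 htors, zero_add, rank_range_of_injective _ hi]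
    exact hA.rank_lt_aleph0
  mem_of_hasPruferQuotient p hp := by
    rintro ⟨f, hf⟩
    by_contra hpπ
    have hpN : ¬ p ∣ N := fun h ↦ hpπ (hN.2 p hp h)
    refine hpπ (hA.mem_of_hasPruferQuotient p hp ⟨f.comp i, fun y ↦ ?_⟩)
    obtain ⟨x, rfl⟩ := hf y
    obtain ⟨n, a, ha⟩ := h x
    obtain ⟨l, hl⟩ := pruferSubgroup.exists_addOrderOf_eq_pow hp (f x)
    have hcop : (N ^ n).gcd (addOrderOf (f x)) = 1 := by
      rw [hl]
      exact (((hp.coprime_iff_not_dvd.2 hpN).symm.pow_left n).pow_right l)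
    obtain ⟨c, hc⟩ := AddSubgroup.mem_zmultiples_iff.1 (mem_zmultiples_nsmul_iff.2 hcop)
    exact ⟨c • a, by rw [← hc, ← map_nsmul, ← ha, map_zsmul]; rfl⟩

lemma finite_setOf_exists_pow_nsmul_eq_zero (hA : IsNiceGroup π A) {T : Type*} [AddCommGroup T]
    {f : A →+ T} (hf : Function.Surjective f) {N : ℕ} (hN : IsPiNumber πᶜ N) :
    {t : T | ∃ n : ℕ, N ^ n • t = 0}.Finite :=
  have := hA.isAddTorsionFree
  _root_.finite_setOf_exists_pow_nsmul_eq_zero hN.1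
    (finite_setOf_nsmul_eq_zero hA.rank_lt_aleph0 hf hN.1)
    fun p hp hpN h ↦ hN.2 p hp hpN (hA.mem_of_hasPruferQuotient p hp (h.of_surjective hf))

end IsNiceGroup

/-! ### Short exact sequences and Černikov `Ext` groups -/

section HasCernikovExt

open Abelian.Ext

universe u v w

variable {𝒞 : Type u} [Category.{v} 𝒞] [Abelian 𝒞] [HasExt.{w} 𝒞] {ω : Set ℕ}

/-- The objects `X` and `Y` have Černikov `ω`-groups as `Ext` groups in all degrees. -/
def HasCernikovExt (ω : Set ℕ) (X Y : 𝒞) : Prop :=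
  ∀ n, IsCernikovOmega ω (Abelian.Ext X Y n)

namespace HasCernikovExt

variable {X Y : 𝒞} {S : ShortComplex 𝒞}

lemma left_X₂ (hS : S.ShortExact) (h₁ : HasCernikovExt ω S.X₁ Y) (h₃ : HasCernikovExt ω S.X₃ Y) :
    HasCernikovExt ω S.X₂ Y := fun n ↦
  .of_exact (f := (mk₀ S.g).precomp Y (zero_add n)) (g := (mk₀ S.f).precomp Y (zero_add n))
    ((ShortComplex.ab_exact_iff_function_exact _).1 (contravariant_sequence_exact₂' hS Y n))
    (h₃ n) (h₁ n)

lemma left_X₃ (hS : S.ShortExact) (h₁ : HasCernikovExt ω S.X₁ Y) (h₂ : HasCernikovExt ω S.X₂ Y) :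
    HasCernikovExt ω S.X₃ Y
  | 0 =>
    have := hS.epi_g
    (h₂ 0).of_injective (precomp_mk₀_injective_of_epi Y S.g)
  | n + 1 =>
    .of_exact (f := hS.extClass.precomp Y (add_comm 1 n))
      (g := (mk₀ S.g).precomp Y (zero_add (n + 1)))
      ((ShortComplex.ab_exact_iff_function_exact _).1
        (contravariant_sequence_exact₃' hS Y n (n + 1) (add_comm 1 n)))
      (h₁ n) (h₂ (n + 1))

lemma right_X₂ (hS : S.ShortExact) (h₁ : HasCernikovExt ω X S.X₁) (h₃ : HasCernikovExt ω X S.X₃) :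
    HasCernikovExt ω X S.X₂ := fun n ↦
  .of_exact (f := (mk₀ S.f).postcomp X (add_zero n)) (g := (mk₀ S.g).postcomp X (add_zero n))
    ((ShortComplex.ab_exact_iff_function_exact _).1 (covariant_sequence_exact₂' X hS n))
    (h₁ n) (h₃ n)

lemma left_X₂_of_comp_eq_zero (hS : S.ShortExact)
    (h₀ : ∀ n (x : Abelian.Ext S.X₂ Y n), (mk₀ S.f).comp x (zero_add n) = 0)
    (h₃ : HasCernikovExt ω S.X₃ Y) : HasCernikovExt ω S.X₂ Y := fun n ↦
  (h₃ n).of_surjective (f := (mk₀ S.g).precomp Y (zero_add n))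
    fun x ↦ contravariant_sequence_exact₂ hS Y x (h₀ n x)

lemma right_X₂_of_comp_eq_zero (hS : S.ShortExact)
    (h₀ : ∀ n (x : Abelian.Ext X S.X₂ n), x.comp (mk₀ S.g) (add_zero n) = 0)
    (h₁ : HasCernikovExt ω X S.X₁) : HasCernikovExt ω X S.X₂ := fun n ↦
  (h₁ n).of_surjective (f := (mk₀ S.f).postcomp X (add_zero n))
    fun x ↦ covariant_sequence_exact₂ X hS x (h₀ n x)

end HasCernikovExt

end HasCernikovExt

section Module

open Abelian.Ext
open ModuleCat (of ofHom)

universe u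

variable {R : Type u} [CommRing R] {A B : Type u} [AddCommGroup A] [AddCommGroup B]
  [Module R A] [Module R B] {ω : Set ℕ}

lemma shortExact_submodule (N : Submodule R A) :
    (ShortComplex.mk (ofHom N.subtype) (ofHom N.mkQ) (by ext x; simp)).ShortExact :=
  ModuleCat.shortComplex_shortExact _ (LinearMap.exact_subtype_mkQ N) N.subtype_injective
    N.mkQ_surjective

lemma shortExact_lsmul_of_injective {r : R} (hr : Function.Injective (LinearMap.lsmul R A r)) :
    (ShortComplex.mk (r • 𝟙 (of R A)) (ofHom (LinearMap.range (LinearMap.lsmul R A r)).mkQ)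
      (by ext a; exact (Submodule.Quotient.mk_eq_zero _).2 ⟨a, rfl⟩)).ShortExact :=
  ModuleCat.shortComplex_shortExact _ (LinearMap.exact_map_mkQ_range _) hr
    (Submodule.mkQ_surjective _)

lemma shortExact_lsmul_of_surjective {r : R} (hr : Function.Surjective (LinearMap.lsmul R A r)) :
    (ShortComplex.mk (ofHom (LinearMap.ker (LinearMap.lsmul R A r)).subtype) (r • 𝟙 (of R A))
      (by ext a; exact a.2)).ShortExact :=
  ModuleCat.shortComplex_shortExact _ (LinearMap.exact_subtype_ker_map _)
    (Submodule.subtype_injective _) hr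

lemma smul_id_eq_zero {r : R} (hr : ∀ a : A, r • a = 0) : r • 𝟙 (of R A) = 0 := by
  ext a
  exact hr a

namespace HasCernikovExt

lemma left_of_submodule (N : Submodule R A) (hN : HasCernikovExt ω (of R N) (of R B))
    (hAN : HasCernikovExt ω (of R (A ⧸ N)) (of R B)) : HasCernikovExt ω (of R A) (of R B) :=
  left_X₂ (shortExact_submodule N) hN hAN

lemma right_of_submodule (N : Submodule R B) (hN : HasCernikovExt ω (of R A) (of R N))
    (hBN : HasCernikovExt ω (of R A) (of R (B ⧸ N))) : HasCernikovExt ω (of R A) (of R B) :=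
  right_X₂ (shortExact_submodule N) hN hBN

lemma left_of_smul_injective {r : R} (hA : Function.Injective (LinearMap.lsmul R A r))
    (hB : ∀ b : B, r • b = 0)
    (h : HasCernikovExt ω (of R (A ⧸ LinearMap.range (LinearMap.lsmul R A r))) (of R B)) :
    HasCernikovExt ω (of R A) (of R B) :=
  left_X₂_of_comp_eq_zero (shortExact_lsmul_of_injective hA)
    (fun n x ↦ by
      rw [mk₀_smul, smul_comp, mk₀_id_comp, smul_eq_comp_mk₀, smul_id_eq_zero hB, mk₀_zero,
        comp_zero]) h

lemma right_of_smul_surjective {r : R} (hA : ∀ a : A, r • a = 0)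
    (hB : Function.Surjective (LinearMap.lsmul R B r))
    (h : HasCernikovExt ω (of R A) (of R (LinearMap.ker (LinearMap.lsmul R B r)))) :
    HasCernikovExt ω (of R A) (of R B) :=
  right_X₂_of_comp_eq_zero (shortExact_lsmul_of_surjective hB)
    (fun n x ↦ by
      rw [← smul_eq_comp_mk₀, ← mk₀_id_comp x, ← smul_comp, ← mk₀_smul, smul_id_eq_zero hA,
        mk₀_zero, zero_comp]) h

lemma of_moduleFinite [IsNoetherianRing R] (hB : IsCernikovOmega ω B) (A : Type u) [AddCommGroup A]
    [Module R A] [Module.Finite R A] : HasCernikovExt ω (of R A) (of R B) := by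
  intro n
  induction n generalizing A with
  | zero =>
    obtain ⟨k, v, hv⟩ := Module.Finite.exists_fin (R := R) (M := A)
    let evalGenerators : Abelian.Ext (of R A) (of R B) 0 →+ (Fin k → B) :=
      (LinearMap.pi fun i ↦ LinearMap.applyₗ (v i)).toAddMonoidHom.comp
        (addEquiv₀.trans ModuleCat.homAddEquiv).toAddMonoidHom
    refine hB.pi.of_injective (f := evalGenerators) fun x y hxy ↦ ?_
    refine (addEquiv₀.trans ModuleCat.homAddEquiv).injective (LinearMap.ext_on_range hv fun i ↦ ?_)
    exact congrFun hxy i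
  | succ n ih =>
    obtain ⟨k, g, hg⟩ := Module.Finite.exists_fin' R A
    have : Projective (of R (Fin k → R)) := (IsProjective.iff_projective _).1 inferInstance
    have hfree : IsCernikovOmega ω (Abelian.Ext (of R (Fin k → R)) (of R B) (n + 1)) :=
      have := subsingleton_of_projective (of R (Fin k → R)) (of R B) n
      .of_subsingleton
    have hS := LinearMap.shortExact_shortComplexKer hg
    exact .of_exact (f := hS.extClass.precomp (of R B) (add_comm 1 n))
      (g := (mk₀ (ofHom g)).precomp (of R B) (zero_add (n + 1)))
      ((ShortComplex.ab_exact_iff_function_exact _).1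
        (contravariant_sequence_exact₃' hS (of R B) n (n + 1) (add_comm 1 n))) (ih _) hfree

end HasCernikovExt

end Module

section Vanishing

open Abelian.Ext
open ModuleCat (of ofHom)

universe u

lemma injective_of_flat {R L : Type u} {J : Type u} [CommRing R] [CommRing L] [Algebra R L]
    [Module.Flat R L] [AddCommGroup J] [Module R J] [Module L J] [IsScalarTower R L J]
    (hJ : Module.Injective L J) : Module.Injective R J where
  out X Y _ _ _ _ f hf g := by
    have hf' : Function.Injective (f.baseChange L) :=
      Module.Flat.lTensor_preserves_injective_linearMap f hf
    obtain ⟨h, hh⟩ := hJ.out (f.baseChange L) hf' (g.liftBaseChange L)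
    refine ⟨(h.restrictScalars R).comp (TensorProduct.mk R L Y 1), fun x ↦ ?_⟩
    simpa using hh (1 ⊗ₜ x)

variable {R : Type u} [CommRing R] (S : Submonoid R)

lemma bijective_lsmul_of_localization {J : Type u} [AddCommGroup J] [Module R J]
    [Module (Localization S) J] [IsScalarTower R (Localization S) J] (s : S) :
    Function.Bijective (LinearMap.lsmul R J s) := by
  obtain ⟨u, hu⟩ := IsLocalization.map_units (Localization S) s
  have smul_eq : (LinearMap.lsmul R J s : J → J) = fun j ↦ u • j := by
    ext j
    rw [LinearMap.lsmul_apply, Units.smul_def, hu, algebraMap_smul]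
  exact smul_eq ▸ MulAction.bijective u

lemma exists_injective_embedding_of_bijective_lsmul {D : Type u} [AddCommGroup D] [Module R D]
    (hD : ∀ s : S, Function.Bijective (LinearMap.lsmul R D s)) :
    ∃ (J : ModuleCat.{u} R) (f : D →ₗ[R] J), Injective J ∧ Function.Injective f ∧
      ∀ s : S, Function.Bijective (LinearMap.lsmul R J s) := by
  let ι := Injective.ι (of (Localization S) (LocalizedModule S D))
  let J := Injective.under (of (Localization S) (LocalizedModule S D))
  have hι : Function.Injective ι.hom := (ModuleCat.mono_iff_injective ι).1 inferInstance
  have hJ : Module.Injective (Localization S) J :=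
    Module.injective_iff_injective_object _ _ |>.2 <|
      inferInstanceAs <| Injective (Injective.under _)
  let _ : Module R J := Module.compHom J (algebraMap R (Localization S))
  have : IsScalarTower R (Localization S) J := IsScalarTower.of_algebraMap_smul fun _ _ ↦ rfl
  have := IsLocalization.flat (Localization S) S
  have hmk : Function.Injective (LocalizedModule.mkLinearMap S D) :=
    (IsLocalizedModule.injective_iff_isRegular S _).2 fun s ↦ (hD s).1
  exact ⟨of R J, (ι.hom.restrictScalars R).comp (LocalizedModule.mkLinearMap S D),
    Module.injective_object_of_injective_module R J (inj := injective_of_flat hJ), hι.comp hmk,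
    bijective_lsmul_of_localization S⟩

variable {S}

lemma bijective_lsmul_quotient_range {D J : Type u} [AddCommGroup D] [AddCommGroup J] [Module R D]
    [Module R J] {r : R} (f : D →ₗ[R] J) (hD : Function.Surjective (LinearMap.lsmul R D r))
    (hJ : Function.Bijective (LinearMap.lsmul R J r)) :
    Function.Bijective (LinearMap.lsmul R (J ⧸ LinearMap.range f) r) := by
  constructor
  · refine (injective_iff_map_eq_zero _).2 fun q hq ↦ ?_
    obtain ⟨j, rfl⟩ := Submodule.mkQ_surjective _ q
    obtain ⟨d, hd⟩ := (Submodule.Quotient.mk_eq_zero _).1 hq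
    obtain ⟨d, rfl⟩ := hD d
    exact (Submodule.Quotient.mk_eq_zero _).2 ⟨d, hJ.1 ((map_smul f r d).symm.trans hd)⟩
  · intro q
    obtain ⟨j, rfl⟩ := Submodule.mkQ_surjective _ q
    obtain ⟨j, rfl⟩ := hJ.2 j
    exact ⟨Submodule.mkQ _ j, rfl⟩

theorem subsingleton_ext_of_bijective_lsmul {A : Type u} [AddCommGroup A] [Module R A]
    (hA : ∀ a : A, ∃ s : S, (s : R) • a = 0) (D : Type u) [AddCommGroup D] [Module R D]
    (hD : ∀ s : S, Function.Bijective (LinearMap.lsmul R D s)) (n : ℕ) :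
    Subsingleton (Abelian.Ext (of R A) (of R D) n) := by
  induction n generalizing D with
  | zero =>
    refine (addEquiv₀.trans ModuleCat.homAddEquiv).subsingleton_congr.2
      (subsingleton_of_forall_eq 0 fun f ↦ LinearMap.ext fun a ↦ ?_)
    obtain ⟨s, hs⟩ := hA a
    exact (hD s).1 (by simp [← map_smul, hs])
  | succ n ih =>
    obtain ⟨J, f, _, hf, hJ⟩ := exists_injective_embedding_of_bijective_lsmul S hD
    have hS : (ShortComplex.mk (ofHom f) (ofHom (LinearMap.range f).mkQ)
        (by ext; simp)).ShortExact :=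
      ModuleCat.shortComplex_shortExact _ (LinearMap.exact_map_mkQ_range f) hf
        (Submodule.mkQ_surjective _)
    have := ih (J ⧸ LinearMap.range f) fun s ↦
      bijective_lsmul_quotient_range f (hD s).2 (hJ s)
    refine subsingleton_of_forall_eq 0 fun x ↦ ?_
    obtain ⟨y, rfl⟩ := covariant_sequence_exact₁ (of R A) hS x (eq_zero_of_injective _) rfl
    rw [Subsingleton.elim y 0, zero_comp]

end Vanishing

section Counting

lemma card_ker_eq_card_quotient_range {R F : Type*} [Ring R] [AddCommGroup F] [Module R F]
    [Finite F] (f : F →ₗ[R] F) :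
    Nat.card (LinearMap.ker f) = Nat.card (F ⧸ LinearMap.range f) := by
  have hker := Submodule.card_eq_card_quotient_mul_card (LinearMap.ker f)
  rw [Nat.card_congr f.quotKerEquivRange.toEquiv, mul_comm,
    Submodule.card_eq_card_quotient_mul_card (LinearMap.range f)] at hker
  exact (Nat.eq_of_mul_eq_mul_left Nat.card_pos hker).symm

lemma finite_torsionBy_natCast (R K : Type*) [CommRing R] [AddCommGroup K] [Module R K]
    [IsArtinian ℤ K] {n : ℕ} (hn : n ≠ 0) : Finite (Submodule.torsionBy R K n) := by
  have : IsArtinian ℤ (Submodule.torsionBy R K n) :=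
    isArtinian_of_injective (Submodule.torsionBy R K n).subtype.toAddMonoidHom.toIntLinearMap
      (Submodule.injective_subtype _)
  exact finite_of_isArtinian_of_nsmul_eq_zero hn fun x ↦
    Subtype.ext ((Nat.cast_smul_eq_nsmul R n x.1).symm.trans x.2)

lemma finite_quotient_range_lsmul_natCast (R K : Type*) [CommRing R] [AddCommGroup K] [Module R K]
    [IsArtinian ℤ K] {n : ℕ} (hn : n ≠ 0) :
    Finite (K ⧸ LinearMap.range (LinearMap.lsmul R K n)) := by
  let N := LinearMap.range (LinearMap.lsmul R K n)
  let f : K →+ K ⧸ N := N.mkQ.toAddMonoidHom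
  have : IsArtinian ℤ (K ⧸ N) := isArtinian_of_surjective K f.toIntLinearMap N.mkQ_surjective
  refine finite_of_isArtinian_of_nsmul_eq_zero hn fun q ↦ ?_
  obtain ⟨x, rfl⟩ := N.mkQ_surjective q
  exact (Submodule.Quotient.mk_eq_zero N).2 ⟨x, Nat.cast_smul_eq_nsmul R n x⟩

lemma finite_of_forall_card_torsionBy_le {K : Type*} [AddCommGroup K] [IsArtinian ℤ K] {c : ℕ}
    (h : ∀ n : ℕ, n ≠ 0 → Nat.card (Submodule.torsionBy ℤ K n) ≤ c) : Finite K := by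
  by_contra hK
  have := not_finite_iff_infinite.1 hK
  obtain ⟨t, ht⟩ := Infinite.exists_subset_card_eq K (c + 1)
  obtain ⟨n, hn, htn⟩ : ∃ n : ℕ, n ≠ 0 ∧ ∀ x ∈ t, n • x = 0 :=
    ⟨∏ x ∈ t, addOrderOf x,
      Finset.prod_ne_zero_iff.2 fun x _ ↦ (isOfFinAddOrder_of_isArtinian x).addOrderOf_pos.ne',
      fun x hx ↦ addOrderOf_dvd_iff_nsmul_eq_zero.1 (Finset.dvd_prod_of_mem addOrderOf hx)⟩
  have := finite_torsionBy_natCast ℤ K hn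
  have hsub : (t : Set K) ⊆ Submodule.torsionBy ℤ K n := fun x hx ↦
    (natCast_zsmul x n).trans (htn x hx)
  have hle := Set.ncard_le_ncard hsub (Set.toFinite _)
  rw [Set.ncard_coe_finset, ht, ← Nat.card_coe_set_eq] at hle
  exact (Nat.lt_of_succ_le hle).not_ge (h n hn)

variable {D : Type*} [AddCommGroup D] {f : D →ₗ[ℤ] D}

-- The connecting map `D[n] → K / n K` of the snake lemma, where `K = ker f`, has kernel `f (D[n])`.
lemma card_torsionBy_ker_le (hf : Function.Surjective f) {m n : ℕ} (hn : n ≠ 0)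
    (hdiv : IsDivisible (LinearMap.range (LinearMap.lsmul ℤ (LinearMap.ker f) m)))
    [Finite (Submodule.torsionBy ℤ D n)]
    [Finite (LinearMap.ker f ⧸ LinearMap.range (LinearMap.lsmul ℤ (LinearMap.ker f) m))] :
    Nat.card (Submodule.torsionBy ℤ (LinearMap.ker f) n) ≤
      Nat.card (LinearMap.ker f ⧸ LinearMap.range (LinearMap.lsmul ℤ (LinearMap.ker f) m)) := by
  let φ : Module.End ℤ (Submodule.torsionBy ℤ D n) :=
    f.restrict fun x hx ↦ by
      rw [Submodule.mem_torsionBy_iff] at hx ⊢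
      rw [← map_smul, hx, map_zero]
  have hker : Nat.card (Submodule.torsionBy ℤ (LinearMap.ker f) n) ≤ Nat.card (LinearMap.ker φ) :=
    Nat.card_le_card_of_injective
      (fun x ↦ ⟨⟨x.1.1, congrArg Subtype.val x.2⟩, Subtype.ext x.1.2⟩)
      fun x y hxy ↦ Subtype.ext <| Subtype.ext <| congrArg (fun z ↦ z.1.1) hxy
  refine (hker.trans_eq (card_ker_eq_card_quotient_range φ)).trans ?_
  have hmem (x : Submodule.torsionBy ℤ D n) :
      (n : ℤ) • Function.surjInv hf x ∈ LinearMap.ker f := by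
    rw [LinearMap.mem_ker, map_smul, Function.surjInv_eq hf]
    exact x.2
  refine Nat.card_le_card_of_injective
    (fun q ↦ Submodule.Quotient.mk ⟨_, hmem (Quotient.out q)⟩) fun q q' hqq' ↦ ?_
  obtain ⟨⟨k, hk⟩, hk'⟩ := hdiv n hn ⟨_, (Submodule.Quotient.eq _).1 hqq'⟩
  replace hk' := congrArg (fun z ↦ z.1.1) hk'
  have hy : Function.surjInv hf q.out - Function.surjInv hf q'.out - k ∈
      Submodule.torsionBy ℤ D n := by
    rw [Submodule.mem_torsionBy_iff, smul_sub, smul_sub, sub_eq_zero]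
    simpa using hk'.symm
  rw [← Quotient.out_eq' q, ← Quotient.out_eq' q']
  refine (Submodule.Quotient.eq _).2 ⟨⟨_, hy⟩, Subtype.ext ?_⟩
  simp [φ, Function.surjInv_eq hf]

theorem finite_ker_of_surjective [IsArtinian ℤ D] (hf : Function.Surjective f) :
    Finite (LinearMap.ker f) := by
  obtain ⟨m, hm, hdiv⟩ := exists_nsmul_range_isDivisible ℤ (LinearMap.ker f)
  have := finite_quotient_range_lsmul_natCast ℤ (LinearMap.ker f) hm
  refine finite_of_forall_card_torsionBy_le (c := Nat.card (LinearMap.ker f ⧸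
    LinearMap.range (LinearMap.lsmul ℤ (LinearMap.ker f) m))) fun n hn ↦ ?_
  have := finite_torsionBy_natCast ℤ D hn
  exact card_torsionBy_ker_le hf hn hdiv

end Counting

/-! ### Coefficients with `π'`-torsion -/

/-- Every element is annihilated by a power of `N`. -/
def IsPowerTorsion (N : ℕ) (D : Type*) [AddCommGroup D] : Prop :=
  ∀ d : D, ∃ n : ℕ, N ^ n • d = 0

namespace IsPowerTorsion

variable {N : ℕ} {D E : Type*} [AddCommGroup D] [AddCommGroup E]

lemma of_surjective (hD : IsPowerTorsion N D) {f : D →+ E} (hf : Function.Surjective f) :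
    IsPowerTorsion N E := fun e ↦ by
  obtain ⟨d, rfl⟩ := hf e
  exact (hD d).imp fun n hn ↦ by rw [← map_nsmul, hn, map_zero]

lemma bijective_nsmul (hD : IsPowerTorsion N D) {c : ℕ} (hc : c.Coprime N) :
    Function.Bijective fun d : D ↦ c • d := by
  have exists_nsmul_nsmul_eq (d : D) : ∃ m : ℕ, m • c • d = d := by
    obtain ⟨n, hn⟩ := hD d
    exact exists_nsmul_eq_self_of_coprime <|
      (hc.pow_right n).coprime_dvd_right (addOrderOf_dvd_iff_nsmul_eq_zero.2 hn)
  constructor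
  · refine (injective_iff_map_eq_zero (nsmulAddMonoidHom (α := D) c)).2 fun d hd ↦ ?_
    obtain ⟨m, hm⟩ := exists_nsmul_nsmul_eq d
    rw [← hm, show c • d = 0 from hd, smul_zero]
  · intro d
    obtain ⟨m, hm⟩ := exists_nsmul_nsmul_eq d
    exact ⟨m • d, by rw [smul_comm] at hm; exact hm⟩

end IsPowerTorsion

section PiComplement

open ModuleCat (of)

universe u

variable {R : Type u} [CommRing R] {π ω : Set ℕ} {A D : Type u} [AddCommGroup A] [AddCommGroup D]
  [Module R A] [Module R D] {N : ℕ}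

lemma mem_torsion'_powers_iff {t : A} :
    t ∈ Submodule.torsion' R A (Submonoid.powers N) ↔ ∃ n : ℕ, N ^ n • t = 0 := by
  rw [Submodule.mem_torsion'_iff]
  exact ⟨fun ⟨⟨_, n, rfl⟩, h⟩ ↦ ⟨n, h⟩, fun ⟨n, h⟩ ↦ ⟨⟨_, n, rfl⟩, h⟩⟩

lemma exists_coprime_nsmul_quotient_torsion'_eq_zero (hN : N ≠ 0)
    (hA : ∀ a : A, ∃ m : ℕ, m ≠ 0 ∧ m • a = 0)
    (t : A ⧸ Submodule.torsion' R A (Submonoid.powers N)) : ∃ c : ℕ, c.Coprime N ∧ c • t = 0 := by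
  obtain ⟨a, rfl⟩ := Submodule.mkQ_surjective _ t
  obtain ⟨m, hm, hma⟩ := hA a
  obtain ⟨x, c, rfl, hx, hc⟩ := IsPiNumber.exists_eq_mul {p | p ∣ N} hm
  have hNN : IsPiNumber {p | p ∣ N} N := ⟨hN, fun p _ h ↦ h⟩
  obtain ⟨l, y, hy⟩ := hx.exists_dvd_pow hN
  refine ⟨c, (hNN.coprime hc).symm, (Submodule.Quotient.mk_eq_zero _).2 <|
    mem_torsion'_powers_iff.2 ⟨l, ?_⟩⟩
  rw [hy, ← mul_smul, mul_right_comm, mul_comm, mul_smul, hma, smul_zero]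

lemma HasCernikovExt.of_forall_exists_bijective_lsmul
    (h : ∀ a : A, ∃ r : R, r • a = 0 ∧ Function.Bijective (LinearMap.lsmul R D r)) :
    HasCernikovExt ω (of R A) (of R D) := fun n ↦ by
  let S : Submonoid R :=
    (IsUnit.submonoid (Module.End R D)).comap (algebraMap R (Module.End R D))
  have mem_iff (r : R) : r ∈ S ↔ Function.Bijective (LinearMap.lsmul R D r) :=
    Module.End.isUnit_iff _
  have := subsingleton_ext_of_bijective_lsmul (S := S)
    (fun a ↦ (h a).elim fun r hr ↦ ⟨⟨r, (mem_iff r).2 hr.2⟩, hr.1⟩) D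
    (fun s ↦ (mem_iff s).1 s.2) n
  exact .of_subsingleton

namespace IsNiceGroup

variable [IsNoetherianRing R]

lemma hasCernikovExt_of_finite (hA : IsNiceGroup π A) (hD : IsCernikovOmega ω D) [Finite D] :
    HasCernikovExt ω (of R A) (of R D) := by
  have := hA.isAddTorsionFree
  let r : R := (Nat.card D : ℕ)
  let Q := A ⧸ LinearMap.range (LinearMap.lsmul R A r)
  have hr : Function.Injective (LinearMap.lsmul R A r) := fun a b hab ↦
    nsmul_right_injective Nat.card_pos.ne' <| by
      simpa only [r, LinearMap.lsmul_apply, Nat.cast_smul_eq_nsmul] using hab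
  have hQ : ∀ q : Q, Nat.card D • q = 0 := fun q ↦ by
    obtain ⟨a, rfl⟩ := Submodule.mkQ_surjective _ q
    exact (Submodule.Quotient.mk_eq_zero _).2 ⟨a, Nat.cast_smul_eq_nsmul R _ a⟩
  let _ : Module (ZMod (Nat.card D)) Q := AddCommGroup.zmodModule hQ
  have : NeZero (Nat.card D) := ⟨Nat.card_pos.ne'⟩
  have : Finite Q := finite_of_surjective_of_module_zmod (m := Nat.card D) hA.rank_lt_aleph0
    (f := (Submodule.mkQ _).toAddMonoidHom) (Submodule.mkQ_surjective _)
  exact .left_of_smul_injective hr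
    (fun d ↦ (Nat.cast_smul_eq_nsmul R _ d).trans card_nsmul_eq_zero') (.of_moduleFinite hD Q)

lemma hasCernikovExt_of_isPiNumber_compl (hA : IsNiceGroup π A) (hD : IsCernikovOmega ω D)
    (hN : IsPiNumber πᶜ N) (hDN : IsPowerTorsion N D) :
    HasCernikovExt ω (of R A) (of R D) := by
  obtain ⟨s, hs, hspan⟩ := exists_finite_forall_smul_mem_span hA.rank_lt_aleph0
  let A₀ := Submodule.span R s
  let T := Submodule.torsion' R (A ⧸ A₀) (Submonoid.powers N)
  have : Module.Finite R A₀ := .span_of_finite R hs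
  have : Finite T := by
    refine ((hA.finite_setOf_exists_pow_nsmul_eq_zero (f := A₀.mkQ.toAddMonoidHom)
      A₀.mkQ_surjective hN).subset fun t ht ↦ mem_torsion'_powers_iff.1 ht).to_subtype
  have htors (t : A ⧸ A₀) : ∃ m : ℕ, m ≠ 0 ∧ m • t = 0 := by
    obtain ⟨a, rfl⟩ := A₀.mkQ_surjective t
    obtain ⟨m, hm, hma⟩ := hspan a
    exact ⟨m, hm, (Submodule.Quotient.mk_eq_zero _).2 (Submodule.span_subset_span ℤ R s hma)⟩
  refine .left_of_submodule A₀ (.of_moduleFinite hD A₀) <|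
    .left_of_submodule T (.of_moduleFinite hD T) <|
      .of_forall_exists_bijective_lsmul fun t ↦ ?_
  obtain ⟨c, hc, hct⟩ := exists_coprime_nsmul_quotient_torsion'_eq_zero hN.1 htors t
  refine ⟨c, (Nat.cast_smul_eq_nsmul R c t).trans hct, ?_⟩
  have smul_eq : (LinearMap.lsmul R D c : D → D) = fun d ↦ c • d :=
    funext (Nat.cast_smul_eq_nsmul R c)
  exact smul_eq ▸ hDN.bijective_nsmul hc

end IsNiceGroup

end PiComplement

/-! ### Covering power-torsion modules -/

section Cover

universe u

variable {R : Type u} [CommRing R] {π : Set ℕ} {A W E : Type u} [AddCommGroup A] [AddCommGroup W]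
  [AddCommGroup E] [Module R A] [Module R W] [Module R E]

lemma bijective_lsmul_localizedModule_powers (r : R) :
    Function.Bijective (LinearMap.lsmul R (LocalizedModule (Submonoid.powers r) W) r) :=
  (Module.End.isUnit_iff _).1 <| IsLocalizedModule.map_units
    (LocalizedModule.mkLinearMap (Submonoid.powers r) W) ⟨r, Submonoid.mem_powers r⟩

/-- The inverse limit of the tower `⋯ → E → E → E` of multiplications by `r`. -/
def smulTower (r : R) (E : Type*) [AddCommGroup E] [Module R E] : Submodule R (ℕ → E) where
  carrier := {x | ∀ i, r • x (i + 1) = x i}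
  zero_mem' _ := smul_zero r
  add_mem' hx hy i := by simp only [Pi.add_apply, smul_add, hx i, hy i]
  smul_mem' s x hx i := by simp only [Pi.smul_apply, smul_comm r s, hx i]

lemma bijective_lsmul_smulTower (r : R) :
    Function.Bijective (LinearMap.lsmul R (smulTower r E) r) := by
  constructor
  · refine (injective_iff_map_eq_zero _).2 fun x hx ↦ Subtype.ext <| funext fun i ↦ ?_
    rw [← x.2 i]
    exact congrFun (congrArg Subtype.val hx) (i + 1)
  · intro x
    exact ⟨⟨fun i ↦ x.1 (i + 1), fun i ↦ x.2 (i + 1)⟩, Subtype.ext (funext x.2)⟩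

lemma exists_smulTower_apply_zero_eq {r : R} (hr : Function.Surjective (LinearMap.lsmul R E r))
    (e : E) : ∃ x : smulTower r E, x.1 0 = e :=
  ⟨⟨fun i ↦ (Function.surjInv hr)^[i] e, fun i ↦ by
    change r • (Function.surjInv hr)^[i + 1] e = (Function.surjInv hr)^[i] e
    rw [Function.iterate_succ_apply']
    exact Function.surjInv_eq hr _⟩, rfl⟩

lemma exists_localizedModule_map_mk_one_eq {r : R} {I : Ideal R}
    (hr : Function.Surjective (LinearMap.lsmul R E r)) (hI : I ≤ Module.annihilator R E) (e : E) :
    ∃ g : LocalizedModule (Submonoid.powers r) (R ⧸ I) →ₗ[R] E,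
      g (LocalizedModule.mkLinearMap _ _ 1) = e := by
  obtain ⟨x, rfl⟩ := exists_smulTower_apply_zero_eq hr e
  let φ : (R ⧸ I) →ₗ[R] smulTower r E := I.liftQ (LinearMap.toSpanSingleton R _ x) fun s hs ↦
    Subtype.ext <| funext fun i ↦ Module.mem_annihilator.1 (hI hs) (x.1 i)
  have isUnit_smul (s : Submonoid.powers r) :
      IsUnit (algebraMap R (Module.End R (smulTower r E)) s) := by
    obtain ⟨_, n, rfl⟩ := s
    rw [map_pow]
    exact ((Module.End.isUnit_iff _).2 (bijective_lsmul_smulTower r)).pow n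
  let evalZero : smulTower r E →ₗ[R] E := (LinearMap.proj 0).comp (Submodule.subtype _)
  refine ⟨evalZero.comp (LocalizedModule.lift _ φ isUnit_smul), ?_⟩
  rw [LinearMap.comp_apply, ← LinearMap.comp_apply (LocalizedModule.lift _ φ isUnit_smul),
    LocalizedModule.lift_comp]
  change ((1 : R) • x).1 0 = x.1 0
  rw [one_smul]

namespace IsNiceGroup

lemma localizedModule_powers (hW : IsNiceGroup π W) {N : ℕ} (hN : IsPiNumber π N) :
    IsNiceGroup π (LocalizedModule (Submonoid.powers (N : R)) W) := by
  let i := LocalizedModule.mkLinearMap (Submonoid.powers (N : R)) W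
  have := hW.isAddTorsionFree
  have exists_pow_nsmul (x : LocalizedModule (Submonoid.powers (N : R)) W) :
      ∃ (n : ℕ) (w : W), i w = N ^ n • x := by
    obtain ⟨⟨w, _, n, rfl⟩, h⟩ := IsLocalizedModule.surj (Submonoid.powers (N : R)) i x
    exact ⟨n, w, h.symm.trans <| by
      rw [← Nat.cast_smul_eq_nsmul R, Nat.cast_pow]; rfl⟩
  have pow_nsmul_injective (n : ℕ) :
      Function.Injective fun x : LocalizedModule (Submonoid.powers (N : R)) W ↦ N ^ n • x := by
    simpa only [Submonoid.smul_def, ← Nat.cast_pow, Nat.cast_smul_eq_nsmul] using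
      IsLocalizedModule.smul_injective i (⟨N ^ n, n, rfl⟩ : Submonoid.powers (N : R))
  have hi : Function.Injective i := by
    refine (injective_iff_map_eq_zero i).2 fun w hw ↦ ?_
    obtain ⟨⟨_, n, rfl⟩, hn⟩ := (IsLocalizedModule.eq_zero_iff (Submonoid.powers (N : R)) i).1 hw
    refine (nsmul_eq_zero_iff_right (pow_ne_zero n hN.1)).1 ?_
    rw [← Nat.cast_smul_eq_nsmul R, Nat.cast_pow]
    exact hn
  have : IsAddTorsionFree (LocalizedModule (Submonoid.powers (N : R)) W) := by
    refine isAddTorsionFree_iff_not_isOfFinAddOrder.2 fun x hx0 hx ↦ hx0 ?_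
    obtain ⟨m, hm, hmx⟩ := isOfFinAddOrder_iff_nsmul_eq_zero.1 hx
    obtain ⟨n, w, hw⟩ := exists_pow_nsmul x
    have hmw : m • w = 0 := hi <| by
      rw [map_nsmul, hw, smul_comm, hmx, nsmul_zero, map_zero]
    rw [nsmul_eq_zero_iff_right hm.ne'] at hmw
    exact pow_nsmul_injective n (by simp only [← hw, hmw, map_zero, nsmul_zero])
  exact hW.of_pow_nsmul_mem_range (i := i.toAddMonoidHom) hi hN fun x ↦
    (exists_pow_nsmul x).imp fun n ⟨w, hw⟩ ↦ ⟨w, hw⟩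

/-- Multiplication by `N` is surjective on a module mapping onto the elements killed by `N`, so its
image contains the elements killed by each power of `N`. -/
lemma exists_surjective_of_isDivisible {I : Ideal R} (hI : IsNiceGroup π (R ⧸ I))
    (hIE : I ≤ Module.annihilator R E) {N : ℕ} (hN : IsPiNumber π N) (hE : IsPowerTorsion N E)
    (hfin : Finite (Submodule.torsionBy R E N)) (hdiv : IsDivisible E) :
    ∃ (M : ModuleCat.{u} R) (g : M →ₗ[R] E), IsNiceGroup π M ∧ Function.Surjective g := by
  let L := LocalizedModule (Submonoid.powers (N : R)) (R ⧸ I)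
  obtain ⟨k, ⟨e⟩⟩ := Finite.exists_equiv_fin (Submodule.torsionBy R E N)
  have hr : Function.Surjective (LinearMap.lsmul R E N) := fun x ↦
    (hdiv N hN.1 x).imp fun y hy ↦ (Nat.cast_smul_eq_nsmul R N y).trans hy
  choose g hg using exists_localizedModule_map_mk_one_eq hr hIE
  let G : (Fin k → L) →ₗ[R] E := LinearMap.lsum R (fun _ ↦ L) R fun i ↦ g (e.symm i)
  refine ⟨.of R (Fin k → L), G, (hI.localizedModule_powers hN).pi (Fin k), fun x ↦ ?_⟩
  obtain ⟨n, hn⟩ := hE x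
  induction n generalizing x with
  | zero => exact ⟨0, by simpa using hn.symm⟩
  | succ n ih =>
    obtain ⟨y, hy⟩ := ih (N • x) (by rw [← mul_smul, ← pow_succ, hn])
    choose z hz using fun i ↦ (bijective_lsmul_localizedModule_powers (N : R)).2 (y i)
    have hxz : x - G z ∈ Submodule.torsionBy R E N := by
      rw [Submodule.mem_torsionBy_iff, smul_sub, sub_eq_zero, ← map_smul,
        Nat.cast_smul_eq_nsmul, ← hy]
      exact congrArg G (funext fun i ↦ (hz i).symm)
    refine ⟨Pi.single (e ⟨_, hxz⟩) (LocalizedModule.mkLinearMap _ _ 1) + z, ?_⟩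
    rw [map_add, LinearMap.lsum_piSingle, hg, e.symm_apply_apply, sub_add_cancel]

lemma quotient_annihilator (hA : IsNiceGroup π A) :
    IsNiceGroup π (R ⧸ Module.annihilator R A) := by
  obtain ⟨s, hs, hspan⟩ := exists_finite_forall_smul_mem_span hA.rank_lt_aleph0
  have := hA.isAddTorsionFree
  obtain ⟨k, v, -, rfl⟩ := hs.fin_param
  let f : R →ₗ[R] (Fin k → A) := LinearMap.pi fun i ↦ LinearMap.toSpanSingleton R A (v i)
  have hf : LinearMap.ker f = Module.annihilator R A := by
    refine le_antisymm (fun r hr ↦ Module.mem_annihilator.2 fun a ↦ ?_) fun r hr ↦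
      LinearMap.mem_ker.2 <| funext fun i ↦ Module.mem_annihilator.1 hr (v i)
    have hspan_le : Submodule.span ℤ (Set.range v) ≤
        LinearMap.ker (LinearMap.lsmul R A r).toAddMonoidHom.toIntLinearMap := by
      refine Submodule.span_le.2 ?_
      rintro _ ⟨i, rfl⟩
      exact congrFun (LinearMap.mem_ker.1 hr) i
    obtain ⟨m, hm, hma⟩ := hspan a
    rw [← nsmul_eq_zero_iff_right hm, ← smul_comm]
    exact hspan_le hma
  let g : R ⧸ Module.annihilator R A →ₗ[R] (Fin k → A) := Submodule.liftQ _ f hf.ge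
  exact (hA.pi (Fin k)).of_injective (f := g.toAddMonoidHom) <|
    LinearMap.ker_eq_bot.1 <| Submodule.ker_liftQ_eq_bot' _ _ hf.symm

end IsNiceGroup

end Cover

/-! ### Coefficients with `π`-torsion -/

section PiPart

open ModuleCat (of)

universe u

variable {R : Type u} [CommRing R] {π ω : Set ℕ} {A B D : Type u} [AddCommGroup A]
  [AddCommGroup B] [AddCommGroup D] [Module R A] [Module R B] [Module R D] {N : ℕ}

/-- The module `B` has no infinite quotient which is also a quotient of a nice module. -/
def CommonNiceQuotientsFinite (π : Set ℕ) (R B : Type u) [CommRing R] [AddCommGroup B]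
    [Module R B] : Prop :=
  ∀ (C M : Type u) [AddCommGroup C] [AddCommGroup M] [Module R C] [Module R M]
    (f : B →ₗ[R] C) (g : M →ₗ[R] C),
    Function.Surjective f → Function.Surjective g → IsNiceGroup π M → Finite C

lemma CommonNiceQuotientsFinite.of_surjective (hB : CommonNiceQuotientsFinite π R B)
    {q : B →ₗ[R] D} (hq : Function.Surjective q) : CommonNiceQuotientsFinite π R D :=
  fun C M _ _ _ _ f g hf ↦ hB C M (f.comp q) g (hf.comp hq)

lemma IsDivisible.subsingleton_of_finite (hD : IsDivisible D) [Finite D] : Subsingleton D := by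
  refine subsingleton_of_forall_eq 0 fun d ↦ ?_
  obtain ⟨e, rfl⟩ := hD (Nat.card D) Nat.card_pos.ne' d
  exact card_nsmul_eq_zero'

namespace IsNiceGroup

lemma annihilator_smul_top_eq_top [IsArtinian ℤ D] (hA : IsNiceGroup π A)
    (hQ : CommonNiceQuotientsFinite π R D) (hdiv : IsDivisible D) (hN : IsPiNumber π N)
    (hDN : IsPowerTorsion N D) : Module.annihilator R A • (⊤ : Submodule R D) = ⊤ := by
  let J := Module.annihilator R A • (⊤ : Submodule R D)
  let mkJ : D →+ D ⧸ J := J.mkQ.toAddMonoidHom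
  have : IsArtinian ℤ (D ⧸ J) := isArtinian_of_surjective D mkJ.toIntLinearMap J.mkQ_surjective
  have annihilator_le : Module.annihilator R A ≤ Module.annihilator R (D ⧸ J) := fun r hr ↦
    Module.mem_annihilator.2 fun e ↦ by
      obtain ⟨d, rfl⟩ := J.mkQ_surjective e
      exact (Submodule.Quotient.mk_eq_zero J).2 (Submodule.smul_mem_smul hr trivial)
  have hdivJ : IsDivisible (D ⧸ J) := hdiv.of_surjective (f := mkJ) J.mkQ_surjective
  obtain ⟨M, g, hM, hg⟩ := exists_surjective_of_isDivisible hA.quotient_annihilator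
    annihilator_le hN (hDN.of_surjective (f := mkJ) J.mkQ_surjective)
    (finite_torsionBy_natCast R _ hN.1) hdivJ
  have : Finite (D ⧸ J) := hQ _ M J.mkQ g J.mkQ_surjective hg hM
  exact Submodule.Quotient.subsingleton_iff.1 hdivJ.subsingleton_of_finite

variable [IsNoetherianRing R]

lemma hasCernikovExt_of_smul_surjective (hA : IsNiceGroup π A) (hD : IsCernikovOmega ω D) {r : R}
    (hr : r ∈ Module.annihilator R A) (hsurj : Function.Surjective (LinearMap.lsmul R D r)) :
    HasCernikovExt ω (of R A) (of R D) := by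
  have := hD.isArtinian
  let f : D →+ D := (LinearMap.lsmul R D r).toAddMonoidHom
  have : Finite (LinearMap.ker (LinearMap.lsmul R D r)) :=
    finite_ker_of_surjective (f := f.toIntLinearMap) hsurj
  refine .right_of_smul_surjective (Module.mem_annihilator.1 hr) hsurj <|
    hA.hasCernikovExt_of_finite (hD.of_injective (f := (Submodule.subtype _).toAddMonoidHom) ?_)
  exact Submodule.injective_subtype _

-- On the stable image of multiplication by a generator of `I`, that generator acts surjectively.
lemma hasCernikovExt_of_forall_le_radical {I : Ideal R} (hA : IsNiceGroup π A)
    (hI : I ≤ Module.annihilator R A) (hD : IsCernikovOmega ω D)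
    (h : ∀ (E : Type u) [AddCommGroup E] [Module R E] (q : D →ₗ[R] E), Function.Surjective q →
      I ≤ (Module.annihilator R E).radical → HasCernikovExt ω (of R A) (of R E)) :
    HasCernikovExt ω (of R A) (of R D) := by
  induction I, IsNoetherian.noetherian I using Submodule.fg_induction generalizing D with
  | singleton r =>
    have := hD.isArtinian
    have : IsArtinian R D := isArtinian_of_tower ℤ inferInstance
    obtain ⟨n, hn⟩ := IsArtinian.range_smul_pow_stabilizes D r
    let J := LinearMap.range (r ^ n • LinearMap.id : D →ₗ[R] D)
    have surjective_smul : Function.Surjective (LinearMap.lsmul R J r) := by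
      rintro ⟨x, hx⟩
      obtain ⟨y, rfl⟩ := (hn (n + 1) n.le_succ).le hx
      refine ⟨⟨r ^ n • y, y, rfl⟩, Subtype.ext ?_⟩
      simp [pow_succ', mul_smul]
    refine .right_of_submodule J (hA.hasCernikovExt_of_smul_surjective
      (hD.of_injective (f := J.subtype.toAddMonoidHom) J.injective_subtype)
      (hI (Ideal.mem_span_singleton_self r)) surjective_smul) (h _ J.mkQ J.mkQ_surjective ?_)
    refine (Ideal.span_singleton_le_iff_mem _).2 ⟨n, Module.mem_annihilator.2 fun e ↦ ?_⟩
    obtain ⟨d, rfl⟩ := J.mkQ_surjective e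
    exact (Submodule.Quotient.mk_eq_zero J).2 ⟨d, rfl⟩
  | sup I₁ I₂ _ _ ih₁ ih₂ =>
    refine ih₁ (le_sup_left.trans hI) hD fun E _ _ q hq hE ↦ ?_
    refine ih₂ (le_sup_right.trans hI) (hD.of_surjective (f := q.toAddMonoidHom) hq)
      fun F _ _ q' hq' hF ↦ h F (q'.comp q) (hq'.comp hq) (sup_le (hE.trans ?_) hF)
    exact Ideal.radical_mono (q'.annihilator_le_of_surjective hq')

lemma hasCernikovExt_of_isDivisible (hA : IsNiceGroup π A) (hD : IsCernikovOmega ω D)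
    (hQ : CommonNiceQuotientsFinite π R D) (hdiv : IsDivisible D) (hN : IsPiNumber π N)
    (hDN : IsPowerTorsion N D) : HasCernikovExt ω (of R A) (of R D) := by
  refine hA.hasCernikovExt_of_forall_le_radical le_rfl hD fun E _ _ q hq hrad ↦ ?_
  have hE : IsCernikovOmega ω E := hD.of_surjective (f := q.toAddMonoidHom) hq
  have := hE.isArtinian
  have smul_top := hA.annihilator_smul_top_eq_top (hQ.of_surjective hq)
    (hdiv.of_surjective (f := q.toAddMonoidHom) hq) hN
    (hDN.of_surjective (f := q.toAddMonoidHom) hq)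
  obtain ⟨k, hk⟩ := Ideal.exists_pow_le_of_le_radical_of_fg hrad (IsNoetherian.noetherian _)
  have pow_smul_top (k : ℕ) : Module.annihilator R A ^ k • (⊤ : Submodule R E) = ⊤ := by
    induction k with
    | zero => rw [pow_zero, Ideal.one_eq_top, Submodule.top_smul]
    | succ k ih => rw [pow_succ, mul_smul, smul_top, ih]
  have top_eq_bot : (⊤ : Submodule R E) = ⊥ := (pow_smul_top k).symm.trans <|
    Submodule.le_annihilator_iff.1 (hk.trans Submodule.annihilator_top.ge)
  have : Subsingleton E :=
    (Submodule.subsingleton_iff R).1 (subsingleton_of_bot_eq_top top_eq_bot.symm)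
  exact hA.hasCernikovExt_of_finite hE

lemma hasCernikovExt_of_isPiNumber (hA : IsNiceGroup π A) (hD : IsCernikovOmega ω D)
    (hQ : CommonNiceQuotientsFinite π R D) (hN : IsPiNumber π N) (hDN : IsPowerTorsion N D) :
    HasCernikovExt ω (of R A) (of R D) := by
  have := hD.isArtinian
  have : IsArtinian R D := isArtinian_of_tower ℤ inferInstance
  obtain ⟨m, hm, hdiv⟩ := exists_nsmul_range_isDivisible R D
  let J := LinearMap.range (LinearMap.lsmul R D m)
  have : Finite (D ⧸ J) := finite_quotient_range_lsmul_natCast R D hm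
  have hsurj := (LinearMap.lsmul R D m).surjective_rangeRestrict
  refine .right_of_submodule J ?_ <|
    hA.hasCernikovExt_of_finite (hD.of_surjective (f := J.mkQ.toAddMonoidHom) J.mkQ_surjective)
  exact hA.hasCernikovExt_of_isDivisible
    (hD.of_injective (f := J.subtype.toAddMonoidHom) J.injective_subtype)
    (hQ.of_surjective hsurj) hdiv hN
    (hDN.of_surjective (f := (LinearMap.lsmul R D m).rangeRestrict.toAddMonoidHom) hsurj)

theorem hasCernikovExt (hA : IsNiceGroup π A) (hB : IsCernikovOmega ω B)
    (hQ : CommonNiceQuotientsFinite π R B) : HasCernikovExt ω (of R A) (of R B) := by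
  obtain ⟨N, hN, hBN⟩ := hB.1.exists_forall_pow_nsmul_eq_zero
  obtain ⟨N₁, N₂, rfl, hN₁, hN₂⟩ := IsPiNumber.exists_eq_mul π hN
  let J := Submodule.torsion' R B (Submonoid.powers N₂)
  refine .right_of_submodule J
    (hA.hasCernikovExt_of_isPiNumber_compl
      (hB.of_injective (f := J.subtype.toAddMonoidHom) J.injective_subtype) hN₂ fun d ↦ ?_)
    (hA.hasCernikovExt_of_isPiNumber
      (hB.of_surjective (f := J.mkQ.toAddMonoidHom) J.mkQ_surjective)
      (hQ.of_surjective J.mkQ_surjective) hN₁ fun d ↦ ?_)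
  · exact (mem_torsion'_powers_iff.1 d.2).imp fun n hn ↦ Subtype.ext hn
  · obtain ⟨b, rfl⟩ := J.mkQ_surjective d
    refine (hBN b).imp fun n hn ↦
      (Submodule.Quotient.mk_eq_zero J).2 (mem_torsion'_powers_iff.2 ⟨n, ?_⟩)
    rw [← mul_smul, ← mul_pow, mul_comm, hn]

end IsNiceGroup

end PiPart

/-! ### Dévissage -/

section Devissage

open ModuleCat (of)

universe u

variable {R : Type u} [CommRing R] {π ω : Set ℕ} {A B C D : Type u} [AddCommGroup A]
  [AddCommGroup B] [AddCommGroup C] [AddCommGroup D] [Module R A] [Module R B] [Module R C]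
  [Module R D]

/-- The `Ext` groups of all quotients of `A` with coefficients in `B` are Černikov `ω`-groups.
Unlike for `A` alone, this condition passes to quotients of `A`. -/
def QuotientsHaveCernikovExt (ω : Set ℕ) (R A B : Type u) [CommRing R] [AddCommGroup A]
    [AddCommGroup B] [Module R A] [Module R B] : Prop :=
  ∀ (X : Type u) [AddCommGroup X] [Module R X] (q : A →ₗ[R] X), Function.Surjective q →
    HasCernikovExt ω (of R X) (of R B)

namespace QuotientsHaveCernikovExt

lemma hasCernikovExt (h : QuotientsHaveCernikovExt ω R A B) : HasCernikovExt ω (of R A) (of R B) :=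
  h A .id Function.surjective_id

lemma of_finite [IsNoetherianRing R] [Finite A] (hB : IsCernikovOmega ω B) :
    QuotientsHaveCernikovExt ω R A B := fun X _ _ _ hq ↦
  have := Finite.of_surjective _ hq
  .of_moduleFinite hB X

lemma of_isNiceGroup [IsNoetherianRing R] (hA : IsNiceGroup π A) (hB : IsCernikovOmega ω B)
    (hQ : CommonNiceQuotientsFinite π R B) : QuotientsHaveCernikovExt ω R A B := fun _ _ _ q hq ↦
  have hker : IsNiceGroup π (LinearMap.ker q) :=
    hA.of_injective (f := (LinearMap.ker q).subtype.toAddMonoidHom) (Submodule.injective_subtype _)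
  .left_X₃ (LinearMap.shortExact_shortComplexKer hq) (hker.hasCernikovExt hB hQ)
    (hA.hasCernikovExt hB hQ)

lemma of_surjective (h : QuotientsHaveCernikovExt ω R A B) {f : A →ₗ[R] C}
    (hf : Function.Surjective f) : QuotientsHaveCernikovExt ω R C B :=
  fun X _ _ q hq ↦ h X (q.comp f) (hq.comp hf)

lemma of_exact {f : A →ₗ[R] D} {g : D →ₗ[R] C} (hfg : Function.Exact f g)
    (hg : Function.Surjective g) (hA : QuotientsHaveCernikovExt ω R A B)
    (hC : QuotientsHaveCernikovExt ω R C B) : QuotientsHaveCernikovExt ω R D B := by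
  intro X _ _ q hq
  let J := LinearMap.range (q.comp f)
  have hker : LinearMap.ker g ≤ LinearMap.ker (J.mkQ.comp q) := fun d hd ↦ by
    obtain ⟨a, rfl⟩ := (hfg d).1 hd
    exact (Submodule.Quotient.mk_eq_zero J).2 ⟨a, rfl⟩
  let g' : C →ₗ[R] X ⧸ J :=
    (Submodule.liftQ _ _ hker).comp (g.quotKerEquivOfSurjective hg).symm.toLinearMap
  have hg' : Function.Surjective g' :=
    (LinearMap.range_eq_top.1 <| (Submodule.range_liftQ _ _ hker).trans <|
      LinearMap.range_eq_top.2 (J.mkQ_surjective.comp hq)).comp (LinearEquiv.surjective _)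
  exact .left_of_submodule J (hA J _ (q.comp f).surjective_rangeRestrict) (hC (X ⧸ J) g' hg')

end QuotientsHaveCernikovExt

end Devissage

/-! ### Comparison of the two constructions of `Ext` -/

section Comparison

open CochainComplex.HomComplex Limits

universe w v u

variable {𝒞 : Type u} [Category.{v} 𝒞] [Abelian 𝒞] {X Y : 𝒞}

lemma extMk_zero_eq_zero_iff [HasExt.{w} 𝒞] (P : ProjectiveResolution X) {f : P.complex.X 0 ⟶ Y}
    (hf : P.complex.d 1 0 ≫ f = 0) : P.extMk f 1 rfl hf = 0 ↔ f = 0 := by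
  refine ⟨fun h ↦ ?_, fun h ↦ by subst h; exact P.extMk_zero 1 rfl⟩
  rw [← P.extEquivCohomologyClass.apply_eq_iff_eq, P.extEquivCohomologyClass_extMk,
    P.extEquivCohomologyClass_zero, CohomologyClass.mk_eq_zero_iff,
    Cocycle.toSingleMk_mem_coboundaries_iff _ _ _ _ _ 1 (by simp)] at h
  obtain ⟨g, hg⟩ := h
  have isZero_X : IsZero (P.cochainComplex.X 1) :=
    CochainComplex.isZero_of_isStrictlyLE _ 0 1 one_pos
  rw [isZero_X.eq_of_src g 0, comp_zero] at hg
  rw [← cancel_epi (P.cochainComplexXIso (-(0 : ℕ)) 0 rfl).hom, ← hg, comp_zero]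

lemma d_eq_zero_iff {R : Type*} [Ring R] (K : CochainComplex (ModuleCat.{v} R) ℕ) {n : ℕ}
    {x : K.X n} : (K.d n (n + 1)).hom x = 0 ↔ ∃ z, (K.iCycles n).hom z = x :=
  (ShortComplex.ShortExact.moduleCat_exact_iff_function_exact
    (.mk (K.iCycles n) (K.d n (n + 1)) (by simp))).1
    (ShortComplex.exact_of_f_is_kernel _ (K.cyclesIsKernel n (n + 1) (by simp))) x

lemma homologyπ_zero_eq_zero_iff {R : Type*} [Ring R] (K : CochainComplex (ModuleCat.{v} R) ℕ)
    {z : K.cycles 0} : (K.homologyπ 0).hom z = 0 ↔ z = 0 :=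
  map_eq_zero_iff _ ((ModuleCat.mono_iff_injective (K.homologyπ 0)).1 inferInstance)

lemma homologyπ_succ_eq_zero_iff {R : Type*} [Ring R] (K : CochainComplex (ModuleCat.{v} R) ℕ)
    {n : ℕ} {z : K.cycles (n + 1)} :
    (K.homologyπ (n + 1)).hom z = 0 ↔ ∃ x, (K.toCycles n (n + 1)).hom x = z :=
  (ShortComplex.ShortExact.moduleCat_exact_iff_function_exact
    (.mk (K.toCycles n (n + 1)) (K.homologyπ (n + 1)) (by simp))).1
    (ShortComplex.exact_of_g_is_cokernel _ (K.homologyIsCokernel n (n + 1) (by simp))) z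

theorem nonempty_extObj_addEquiv (R : Type*) [Ring R] [Linear R 𝒞] [EnoughProjectives 𝒞]
    [HasExt.{w} 𝒞] (X Y : 𝒞) (n : ℕ) :
    Nonempty (((Ext R 𝒞 n).obj (Opposite.op X)).obj Y ≃+ Abelian.Ext X Y n) := by
  let P : ProjectiveResolution X := projectiveResolution X
  let K := P.complex.linearYonedaObj R Y
  let ι : K.cycles n →+ (P.complex.X n ⟶ Y) := (K.iCycles n).hom.toAddMonoidHom
  have hι : Function.Injective ι := (ModuleCat.mono_iff_injective (K.iCycles n)).1 inferInstance
  have d_comp_ι (z : K.cycles n) : P.complex.d (n + 1) n ≫ ι z = 0 :=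
    congrArg (fun l ↦ l.hom z) (K.iCycles_d n (n + 1))
  let φ : K.cycles n →+ Abelian.Ext X Y n :=
    .mk' (fun z ↦ P.extMk (ι z) (n + 1) rfl (d_comp_ι z)) fun a b ↦ by
      simp only [P.add_extMk, map_add]
  let ψ : K.cycles n →+ K.homology n := (K.homologyπ n).hom.toAddMonoidHom
  have hφ : Function.Surjective φ := fun α ↦ by
    obtain ⟨f, hf, rfl⟩ := P.extMk_surjective α (n + 1) rfl
    obtain ⟨z, rfl⟩ := (d_eq_zero_iff K).1 hf
    exact ⟨z, rfl⟩
  have hψ : Function.Surjective ψ :=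
    (ModuleCat.epi_iff_surjective (K.homologyπ n)).1 inferInstance
  have hker : ψ.ker = φ.ker := by
    ext z
    cases n with
    | zero =>
      exact (homologyπ_zero_eq_zero_iff K).trans <|
        ((map_eq_zero_iff ι hι).symm.trans (extMk_zero_eq_zero_iff P (d_comp_ι z)).symm)
    | succ n =>
      refine (homologyπ_succ_eq_zero_iff K).trans <| .trans ?_
        (P.extMk_eq_zero_iff (ι z) (n + 2) rfl (d_comp_ι z) n rfl).symm
      refine exists_congr fun x ↦ hι.eq_iff.symm.trans (Eq.congr_left ?_)
      exact congrArg (fun l ↦ l.hom x) (K.toCycles_i n (n + 1))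
  exact ⟨(P.isoExt n Y).toLinearEquiv.toAddEquiv.trans <|
    (QuotientAddGroup.quotientKerEquivOfSurjective ψ hψ).symm.trans <|
      (QuotientAddGroup.quotientAddEquivOfEq hker).trans <|
        QuotientAddGroup.quotientKerEquivOfSurjective φ hφ⟩

end Comparison

/-! ### Representations as modules over the group ring -/

section Functor

universe w w' v v' u u'

variable {𝒞 : Type u} [Category.{v} 𝒞] [Abelian 𝒞] [HasExt.{w} 𝒞]
  {𝒟 : Type u'} [Category.{v'} 𝒟] [Abelian 𝒟] [HasExt.{w'} 𝒟]

lemma HasCernikovExt.of_map [EnoughProjectives 𝒞] (F : 𝒞 ⥤ 𝒟) [F.Additive]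
    [Limits.PreservesFiniteLimits F] [Limits.PreservesFiniteColimits F] [F.Full] [F.Faithful]
    [F.PreservesProjectiveObjects] {ω : Set ℕ} {X Y : 𝒞}
    (h : HasCernikovExt ω (F.obj X) (F.obj Y)) : HasCernikovExt ω X Y := fun n ↦
  (h n).of_injective (f := F.mapExtAddHom X Y n)
    (F.mapExt_bijective_of_preservesProjectiveObjects X Y n).1

end Functor

section Rep

variable {G : Type} [CommGroup G] {π ω : Set ℕ} {A B : Rep.{0} ℤ G}

/-- The module over the group ring `ℤG` corresponding to the representation `A`. -/
abbrev groupRingModule (A : Rep.{0} ℤ G) : Type :=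
  (Rep.toModuleMonoidAlgebra.{0}.obj A : ModuleCat (MonoidAlgebra ℤ G))

/-- The `ℤG`-linear map corresponding to a morphism of representations. -/
abbrev groupRingLinearMap (f : A ⟶ B) :
    groupRingModule A →ₗ[MonoidAlgebra ℤ G] groupRingModule B :=
  (Rep.toModuleMonoidAlgebra.map f).hom

lemma isNoetherianRing_intMonoidAlgebra (hG : Group.FG G) :
    IsNoetherianRing (MonoidAlgebra ℤ G) :=
  have : Monoid.FG G := Group.fg_iff_monoid_fg.1 hG
  Algebra.FiniteType.isNoetherianRing ℤ _

lemma isCernikovOmega_ext_of_hasCernikovExt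
    (h : HasCernikovExt ω (ModuleCat.of (MonoidAlgebra ℤ G) (groupRingModule A))
      (ModuleCat.of (MonoidAlgebra ℤ G) (groupRingModule B))) (n : ℕ) :
    IsCernikovOmega ω (((Ext ℤ (Rep.{0} ℤ G) n).obj (Opposite.op A)).obj B) := by
  let F := Rep.toModuleMonoidAlgebra.{0} (k := ℤ) (G := G)
  have : HasExt.{0} (Rep.{0} ℤ G) := hasExt_of_enoughProjectives _
  have : F.Additive := Functor.additive_of_preserves_binary_products F
  have : F.PreservesProjectiveObjects :=
    ⟨fun hX ↦ (Rep.equivalenceModuleMonoidAlgebra.map_projective_iff _).2 hX⟩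
  have hAB : HasCernikovExt ω A B := .of_map F h
  exact (hAB n).of_addEquiv (nonempty_extObj_addEquiv ℤ A B n).some.symm

lemma commonNiceQuotientsFinite_groupRingModule
    (hB : ¬ ∃ (C : Rep ℤ G) (f : B ⟶ C) (M : Rep ℤ G) (g : M ⟶ C),
      Infinite (C : Type) ∧ Function.Surjective f.hom ∧ NiceRep π M ∧
        Function.Surjective g.hom) :
    CommonNiceQuotientsFinite π (MonoidAlgebra ℤ G) (groupRingModule B) := by
  intro C M _ _ _ _ f g hf hg hM
  by_contra hC
  let U := Rep.ofModuleMonoidAlgebra.{0} (k := ℤ) (G := G)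
  exact hB ⟨U.obj (.of _ C), (Rep.unitIso B).hom ≫ U.map (ModuleCat.ofHom f), U.obj (.of _ M),
    U.map (ModuleCat.ofHom g), not_finite_iff_infinite.1 hC, hf,
    IsNiceGroup.iff_finiteRankAbelian.1 hM, hg⟩

lemma MemC.quotientsHaveCernikovExt [IsNoetherianRing (MonoidAlgebra ℤ G)]
    (hA : MemC G π A) (hB : IsCernikovOmega ω B)
    (hQ : CommonNiceQuotientsFinite π (MonoidAlgebra ℤ G) (groupRingModule B)) :
    QuotientsHaveCernikovExt ω (MonoidAlgebra ℤ G) (groupRingModule A) (groupRingModule B) := by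
  induction hA with
  | of_finite A h =>
    have : Finite (groupRingModule A) := h
    exact .of_finite hB
  | of_nice A h =>
    have hA : IsNiceGroup π (groupRingModule A) := IsNiceGroup.iff_finiteRankAbelian.2 h
    exact .of_isNiceGroup hA hB hQ
  | quot A B f hf _ ih => exact ih.of_surjective (f := groupRingLinearMap f) hf
  | ext A B C f g _ hsurj hexact _ _ ihA ihC =>
    exact .of_exact (f := groupRingLinearMap f) (g := groupRingLinearMap g) hexact hsurj ihA ihC

end Rep

/-- Let `π` be a set of primes and `G` a finitely generated abelian group.  Let
`B` be a `ℤG`-module whose underlying additive group is a Černikov `ω`-group,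
and suppose that no infinite `ℤG`-module quotient of `B` is also a quotient of a
`ℤG`-module whose underlying abelian group is torsion-free of finite rank and
`π`-spectral.  If `A` is a `ℤG`-module in `𝔠(G, π)`, then `Ext^n_{ℤG}(A, B)` is
a Černikov `ω`-group for all `n ≥ 0`. -/
theorem ext_cernikov_of_memC (G : Type) [CommGroup G] (hfg : Group.FG G)
    (π ω : Set ℕ) (B : Rep ℤ G) (hB : IsCernikovOmega ω (B : Type))
    (hquot : ¬ ∃ (C : Rep ℤ G) (f : B ⟶ C) (M : Rep ℤ G) (g : M ⟶ C),
      Infinite (C : Type) ∧ Function.Surjective f.hom ∧ NiceRep π M ∧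
        Function.Surjective g.hom)
    (A : Rep ℤ G) (hA : MemC G π A) (n : ℕ) :
    IsCernikovOmega ω (((Ext ℤ (Rep ℤ G) n).obj (Opposite.op A)).obj B) := by
  have : IsNoetherianRing (MonoidAlgebra ℤ G) := isNoetherianRing_intMonoidAlgebra hfg
  have hQ : CommonNiceQuotientsFinite π (MonoidAlgebra ℤ G) (groupRingModule B) :=
    commonNiceQuotientsFinite_groupRingModule hquot
  have hAB : QuotientsHaveCernikovExt ω (MonoidAlgebra ℤ G) (groupRingModule A)
      (groupRingModule B) := hA.quotientsHaveCernikovExt hB hQ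
  exact isCernikovOmega_ext_of_hasCernikovExt hAB.hasCernikovExt n
end
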